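/- Let n ≥ 1 be an integer, d a nonnegative integer, and f ∈ ℂ[y_i^{±1} : 1 ≤ i ≤ n] a Laurent polynomial such that (y_1⋯y_n)^d · f(y) is a polynomial. Then there exists an analytic function F on the open set ℂ³∖𝒜_n such that F(α,β,γ) = S_n[f](α,β,γ) for every (α,β,γ) ∉ 𝒜_n with Re α > d−1, Re β > −1 and Re γ > 0; that is, S_n[f] admits an analytic continuation to ℂ³∖𝒜_n. -/

import Mathlib

open MeasureTheory Complex

noncomputable section

/-- The open ordered simplex `Δ_n = {y : 1 > y_1 > ⋯ > y_n > 0}`. -/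
def orderedSimplex (n : ℕ) : Set (Fin n → ℝ) :=
  {y | (∀ i, 0 < y i ∧ y i < 1) ∧ ∀ i j : Fin n, i < j → y j < y i}

/-- Evaluation of the Laurent polynomial with coefficient family `c` at a real point. -/
def laurentEval {n : ℕ} (c : (Fin n → ℤ) →₀ ℂ) (y : Fin n → ℝ) : ℂ :=
  c.sum fun k a => a * ∏ i, ((y i : ℂ)) ^ (k i)

/-- The Selberg integrand `∏ y_i^α (1-y_i)^β ∏_{i<j} (y_i-y_j)^{2γ} · f(y)`. -/
def selbergIntegrand (n : ℕ) (f : (Fin n → ℝ) → ℂ) (α β γ : ℂ) (y : Fin n → ℝ) : ℂ :=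
  (∏ i, ((y i : ℂ) ^ α * (((1 - y i : ℝ)) : ℂ) ^ β)) *
    (∏ i : Fin n, ∏ j : Fin n,
      if i < j then (((y i - y j : ℝ)) : ℂ) ^ (2 * γ) else 1) * f y

/-- The Selberg integral `S_n[f](α,β,γ)`. -/
def selbergS (n : ℕ) (f : (Fin n → ℝ) → ℂ) (α β γ : ℂ) : ℂ :=
  ∫ y in orderedSimplex n, selbergIntegrand n f α β γ y

/-- The hyperplane arrangement `𝒜_n ⊂ ℂ³`. -/
def setA (n : ℕ) : Set (ℂ × ℂ × ℂ) :=
  {p | (∃ j : ℕ, 1 ≤ j ∧ j ≤ n ∧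
          ((∃ m : ℤ, (j : ℂ) * (p.1 + ((j : ℂ) - 1) * p.2.2) = m) ∨
           (∃ m : ℤ, (j : ℂ) * (p.2.1 + ((j : ℂ) - 1) * p.2.2) = m))) ∨
       (∃ j : ℕ, 1 ≤ j ∧ j ≤ n - 1 ∧ ∃ m : ℤ, (j : ℂ) * ((j : ℂ) + 1) * p.2.2 = m)}

/-!
All factors of the Selberg integrand are powers of differences of the nodes `1, y_1, …, y_n, 0`, so
let every pair of nodes carry its own exponent. For a proper cluster of consecutive nodes with one
extremity `c` and a neighbour `o` outside the cluster on the opposite side, the vector field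
`(x_i - x_c) (x_i - x_o) / (x_c - x_o)` dilates the cluster around `c` and keeps `o` fixed.
Integrating by parts along it expresses the integral, times the cluster exponent up to an integer,
as a linear combination of integrals with integrally shifted exponents, in which the integrand has
gained at least the ratio of the diameter of the cluster to that of a larger cluster. There are no
boundary terms because the integrand is first damped by `exp (-ε / ∏ |x_i - x_j|)`, and then
`ε → 0`.

Off the hyperplanes where a cluster exponent is an integer one may divide by this factor. Enlarging
a cluster step by step to all nodes, whose diameter is `1`, the ratios telescope and the integrand
gains the diameter of the initial cluster. Starting from every pair of nodes, it gains all factors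
`|x_i - x_j|`, and after finitely many repetitions the integral converges and is analytic in the
exponents. For the Selberg exponents, the clusters that contain `0`, that contain `1`, and that
contain neither give the three families of hyperplanes of `𝒜_n`.
-/

section Nodes

open Finset

variable {n : ℕ} {y : Fin n → ℝ}

/-- The nodes `1, y_1, …, y_n, 0` of a configuration: the `n` variables together with the two
fixed endpoints, so that all factors of the Selberg integrand become differences of nodes. The
variable `y k` has index `k.castSucc.succ`. -/
def node (y : Fin n → ℝ) : Fin (n + 2) → ℝ :=
  Fin.cons 1 (Fin.snoc y 0 : Fin (n + 1) → ℝ)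

@[simp] lemma node_zero (y : Fin n → ℝ) : node y 0 = 1 := rfl

@[simp] lemma node_last (y : Fin n → ℝ) : node y (Fin.last (n + 1)) = 0 := by
  rw [← Fin.succ_last, node, Fin.cons_succ, Fin.snoc_last]

@[simp] lemma node_castSucc_succ (y : Fin n → ℝ) (k : Fin n) : node y k.castSucc.succ = y k := by
  rw [node, Fin.cons_succ, Fin.snoc_castSucc]

lemma node_index_cases {motive : Fin (n + 2) → Prop} (zero : motive 0)
    (last : motive (Fin.last (n + 1))) (mid : ∀ k : Fin n, motive k.castSucc.succ)
    (i : Fin (n + 2)) : motive i :=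
  Fin.cases zero (Fin.lastCases (by rwa [Fin.succ_last]) mid) i

lemma sum_univ_node_index {M : Type*} [AddCommMonoid M] (g : Fin (n + 2) → M) :
    ∑ i, g i = g 0 + ∑ k : Fin n, g k.castSucc.succ + g (Fin.last (n + 1)) := by
  rw [Fin.sum_univ_succ, Fin.sum_univ_castSucc, Fin.succ_last, ← add_assoc]

lemma node_add_smul_single (y : Fin n → ℝ) (k : Fin n) (t : ℝ) :
    node (y + t • Pi.single k 1) = node y + t • Pi.single k.castSucc.succ 1 := by
  ext i
  induction i using node_index_cases with
  | zero => simp [Fin.ext_iff]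
  | last => simp [Fin.ext_iff, k.isLt.ne']
  | mid l => simp [Pi.single_apply]

lemma continuous_node : Continuous (node : (Fin n → ℝ) → Fin (n + 2) → ℝ) := by
  refine continuous_pi fun i => ?_
  induction i using node_index_cases with
  | zero => simpa only [node_zero] using continuous_const
  | last => simpa only [node_last] using continuous_const
  | mid k => simpa only [node_castSucc_succ] using continuous_apply k

lemma mem_orderedSimplex_iff : y ∈ orderedSimplex n ↔ StrictAnti (node y) := by
  constructor
  · rintro ⟨bounds, anti⟩ i j hij
    induction i using node_index_cases with
    | last => exact absurd hij (Fin.le_last j).not_gt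
    | zero =>
      induction j using node_index_cases with
      | zero => exact absurd hij (lt_irrefl _)
      | last => simp
      | mid l => simpa using (bounds l).2
    | mid k =>
      induction j using node_index_cases with
      | zero => exact absurd hij (Fin.zero_le _).not_gt
      | last => simpa using (bounds k).1
      | mid l => simpa using anti k l (by simpa using hij)
  · intro anti
    refine ⟨fun k => ⟨?_, ?_⟩, fun k l hkl => ?_⟩
    · simpa using anti (show k.castSucc.succ < Fin.last (n + 1) by simp [Fin.lt_def])
    · simpa using anti (Fin.succ_pos k.castSucc)
    · simpa using anti (show k.castSucc.succ < l.castSucc.succ by simpa using hkl)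

lemma isOpen_orderedSimplex (n : ℕ) : IsOpen (orderedSimplex n) := by
  have h : orderedSimplex n = ⋂ i, ⋂ j, ⋂ (_ : i < j), {y | node y j < node y i} := by
    ext y
    simp only [mem_orderedSimplex_iff, StrictAnti, Set.mem_iInter, Set.mem_ofPred_eq]
  rw [h]
  have hc (i) : Continuous fun y : Fin n → ℝ => node y i :=
    (continuous_apply i).comp continuous_node
  exact isOpen_iInter_of_finite fun i => isOpen_iInter_of_finite fun j =>
    isOpen_iInter_of_finite fun _ => isOpen_lt (hc j) (hc i)

lemma volume_orderedSimplex_lt_top (n : ℕ) : volume (orderedSimplex n) < ⊤ :=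
  have h : orderedSimplex n ⊆ Set.Icc 0 1 :=
    fun _ hy => ⟨fun i => (hy.1 i).1.le, fun i => (hy.1 i).2.le⟩
  (measure_mono h).trans_lt isCompact_Icc.measure_lt_top

lemma node_sub_ne_zero (hy : y ∈ orderedSimplex n) {i j : Fin (n + 2)} (hij : i ≠ j) :
    node y i - node y j ≠ 0 :=
  sub_ne_zero.2 ((mem_orderedSimplex_iff.1 hy).injective.ne hij)

lemma abs_node_sub_le (hy : y ∈ orderedSimplex n) {i j u v : Fin (n + 2)}
    (hi : i ∈ uIcc u v) (hj : j ∈ uIcc u v) : |node y i - node y j| ≤ |node y u - node y v| := by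
  have maps : Set.MapsTo (node y) (Set.uIcc u v) (Set.uIcc (node y u) (node y v)) :=
    ((mem_orderedSimplex_iff.1 hy).antitone.antitoneOn _).mapsTo_uIcc
  rw [← coe_uIcc] at maps
  rw [abs_sub_comm (node y i), abs_sub_comm (node y u)]
  exact Set.abs_sub_le_of_uIcc_subset_uIcc
    (Set.uIcc_subset_uIcc (maps (mem_coe.2 hi)) (maps (mem_coe.2 hj)))

lemma abs_node_sub_le_one (hy : y ∈ orderedSimplex n) (i j : Fin (n + 2)) :
    |node y i - node y j| ≤ 1 := by
  have hu (k : Fin (n + 2)) : k ∈ uIcc 0 (Fin.last (n + 1)) := by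
    simp [Fin.le_last]
  simpa using abs_node_sub_le hy (hu i) (hu j)

end Nodes

section LogForm

open Finset

variable {n : ℕ} {y : Fin n → ℝ}

/-- Exponent matrices of products of powers of node differences. The exponent of the pair `{i, j}`
is split into the entries at `(i, j)` and `(j, i)`; diagonal entries have no effect. -/
abbrev Exponents (n : ℕ) : Type := Fin (n + 2) → Fin (n + 2) → ℂ

/-- The logarithm of the distance between two nodes. As `Real.log x = log |x|` and `Real.log 0 = 0`,
it is symmetric in the indices and vanishes on the diagonal. -/
def logDist (y : Fin n → ℝ) (i j : Fin (n + 2)) : ℝ := Real.log (node y i - node y j)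

/-- The logarithm `∑ s_ij log |x_i - x_j|` of the product of powers of node differences with
exponents `s`, as a linear form in `s`. -/
def logForm (y : Fin n → ℝ) : Exponents n →L[ℂ] ℂ :=
  ∑ i, ∑ j, (logDist y i j : ℂ) •
    (ContinuousLinearMap.proj (R := ℂ) (φ := fun _ => ℂ) j ∘L ContinuousLinearMap.proj i)

/-- The logarithm of the reciprocal of the product of all node distances. It is nonnegative on the
simplex and tends to infinity at its boundary. -/
def barrier (y : Fin n → ℝ) : ℝ := -∑ i, ∑ j, logDist y i j

lemma logForm_apply (y : Fin n → ℝ) (s : Exponents n) :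
    logForm y s = ∑ i, ∑ j, s i j * logDist y i j := by
  simp [logForm, mul_comm]

lemma logForm_one (y : Fin n → ℝ) : logForm y 1 = -(barrier y : ℂ) := by
  simp [logForm_apply, barrier]

lemma logDist_comm (y : Fin n → ℝ) (i j : Fin (n + 2)) : logDist y i j = logDist y j i := by
  rw [logDist, logDist, ← Real.log_neg_eq_log, neg_sub]

lemma exp_logDist (hy : y ∈ orderedSimplex n) {i j : Fin (n + 2)} (hij : i ≠ j) :
    Real.exp (logDist y i j) = |node y i - node y j| :=
  Real.exp_log_eq_abs (node_sub_ne_zero hy hij)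

lemma logDist_le_logDist (hy : y ∈ orderedSimplex n) {i j u v : Fin (n + 2)} (hij : i ≠ j)
    (hi : i ∈ uIcc u v) (hj : j ∈ uIcc u v) : logDist y i j ≤ logDist y u v := by
  rw [logDist, logDist, ← Real.log_abs, ← Real.log_abs (node y u - _)]
  exact Real.log_le_log (abs_pos.2 (node_sub_ne_zero hy hij)) (abs_node_sub_le hy hi hj)

lemma logDist_nonpos (hy : y ∈ orderedSimplex n) (i j : Fin (n + 2)) : logDist y i j ≤ 0 := by
  rw [logDist, ← Real.log_abs]
  exact Real.log_nonpos (abs_nonneg _) (abs_node_sub_le_one hy i j)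

lemma barrier_nonneg (hy : y ∈ orderedSimplex n) : 0 ≤ barrier y :=
  neg_nonneg.2 (sum_nonpos fun _ _ => sum_nonpos fun _ _ => logDist_nonpos hy _ _)

lemma neg_barrier_le_logDist (hy : y ∈ orderedSimplex n) (i j : Fin (n + 2)) :
    -barrier y ≤ logDist y i j := by
  rw [barrier, neg_neg, ← add_sum_erase _ _ (mem_univ i), ← add_sum_erase _ _ (mem_univ j),
    add_assoc]
  exact add_le_of_nonpos_right (add_nonpos (sum_nonpos fun _ _ => logDist_nonpos hy _ _)
    (sum_nonpos fun _ _ => sum_nonpos fun _ _ => logDist_nonpos hy _ _))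

lemma exp_neg_barrier_le_abs (hy : y ∈ orderedSimplex n) {i j : Fin (n + 2)} (hij : i ≠ j) :
    Real.exp (-barrier y) ≤ |node y i - node y j| :=
  exp_logDist hy hij ▸ Real.exp_le_exp.2 (neg_barrier_le_logDist hy i j)

lemma abs_inv_node_sub_le (hy : y ∈ orderedSimplex n) (i j : Fin (n + 2)) :
    |(node y i - node y j)⁻¹| ≤ Real.exp (barrier y) := by
  obtain rfl | hij := eq_or_ne i j
  · simpa using (Real.exp_pos _).le
  · rw [abs_inv, ← exp_logDist hy hij, ← Real.exp_neg, Real.exp_le_exp]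
    exact neg_le.1 (neg_barrier_le_logDist hy i j)

lemma norm_logForm_le (hy : y ∈ orderedSimplex n) : ‖logForm y‖ ≤ barrier y := by
  refine ContinuousLinearMap.opNorm_le_bound _ (barrier_nonneg hy) fun s => ?_
  rw [logForm_apply, barrier, neg_mul, sum_mul, ← sum_neg_distrib]
  refine (norm_sum_le _ _).trans (sum_le_sum fun i _ => ?_)
  rw [sum_mul, ← sum_neg_distrib]
  refine (norm_sum_le _ _).trans (sum_le_sum fun j _ => ?_)
  rw [norm_mul, Complex.norm_real, Real.norm_of_nonpos (logDist_nonpos hy i j), mul_neg, mul_comm]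
  have hs : ‖s i j‖ ≤ ‖s‖ := (norm_le_pi_norm (s i) j).trans (norm_le_pi_norm s i)
  exact neg_le_neg (mul_le_mul_of_nonpos_left hs (logDist_nonpos hy i j))

lemma re_logForm_le (hy : y ∈ orderedSimplex n) (s : Exponents n) :
    (logForm y s).re ≤ ‖s‖ * barrier y :=
  calc (logForm y s).re ≤ ‖logForm y s‖ := Complex.re_le_norm _
    _ ≤ ‖logForm y‖ * ‖s‖ := (logForm y).le_opNorm s
    _ ≤ barrier y * ‖s‖ := by gcongr; exact norm_logForm_le hy
    _ = ‖s‖ * barrier y := mul_comm _ _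

lemma continuousOn_logDist (i j : Fin (n + 2)) :
    ContinuousOn (fun y : Fin n → ℝ => logDist y i j) (orderedSimplex n) := by
  obtain rfl | hij := eq_or_ne i j
  · simpa only [logDist, sub_self] using continuousOn_const
  · have hc (k : Fin (n + 2)) : Continuous fun y : Fin n → ℝ => node y k :=
      (continuous_apply k).comp continuous_node
    exact ((hc i).sub (hc j)).continuousOn.log fun y hy => node_sub_ne_zero hy hij

lemma continuousOn_logForm : ContinuousOn (logForm (n := n)) (orderedSimplex n) :=
  continuousOn_finsetSum _ fun i _ => continuousOn_finsetSum _ fun j _ =>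
    (Complex.continuous_ofReal.comp_continuousOn (continuousOn_logDist i j)).smul continuousOn_const

lemma continuousOn_logForm_apply (s : Exponents n) :
    ContinuousOn (fun y : Fin n → ℝ => logForm y s) (orderedSimplex n) :=
  continuousOn_logForm.clm_apply continuousOn_const

lemma continuousOn_barrier : ContinuousOn (barrier (n := n)) (orderedSimplex n) :=
  (continuousOn_finsetSum _ fun i _ => continuousOn_finsetSum _ fun j _ =>
    continuousOn_logDist i j).neg

lemma abs_node_sub_node_le_dist (z w : Fin n → ℝ) (i : Fin (n + 2)) :
    |node z i - node w i| ≤ dist z w := by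
  induction i using node_index_cases with
  | zero => simp
  | last => simp
  | mid k => simpa [Real.dist_eq] using dist_le_pi_dist z w k

lemma exp_neg_barrier_le_dist {z w : Fin n → ℝ} (hz : z ∈ orderedSimplex n)
    (hw : w ∉ orderedSimplex n) : Real.exp (-barrier z) ≤ 2 * dist z w := by
  simp only [mem_orderedSimplex_iff, StrictAnti, not_forall, not_lt] at hw
  obtain ⟨i, j, hij, hw⟩ := hw
  have hz_pos := sub_pos.2 (mem_orderedSimplex_iff.1 hz hij)
  have hz_le := exp_neg_barrier_le_abs hz hij.ne
  rw [abs_of_pos hz_pos] at hz_le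
  linarith [le_abs_self (node z i - node w i), neg_abs_le (node z j - node w j),
    abs_node_sub_node_le_dist z w i, abs_node_sub_node_le_dist z w j]

end LogForm

section LineDeriv

variable {E F : Type*} [NormedAddCommGroup E] [NormedSpace ℝ E] [NormedAddCommGroup F]
  [NormedSpace ℝ F] {U : Set E} {f f' : E → F} {v : E} {K : ℝ}

lemma hasLineDerivAt_zero_of_norm_le_sq {x : E}
    (hf : ∀ z, ‖f z‖ ≤ K * dist z x ^ 2) : HasLineDerivAt ℝ f 0 x v := by
  have hO : (fun t : ℝ => f (x + t • v)) =O[nhds 0] fun t => ‖t - 0‖ ^ 2 := by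
    refine .of_bound (K * ‖v‖ ^ 2) (.of_forall fun t => ?_)
    simpa [norm_smul, mul_pow, mul_comm, mul_left_comm, mul_assoc] using hf (x + t • v)
  simpa [HasLineDerivAt] using (hO.hasFDerivAt (𝕜 := ℝ) one_lt_two).hasDerivAt

lemma hasLineDerivAt_indicator (hU : IsOpen U) (hd : ∀ z ∈ U, HasLineDerivAt ℝ f (f' z) z v)
    (hK : ∀ z ∈ U, ∀ w ∉ U, ‖f z‖ ≤ K * dist z w ^ 2) (x : E) :
    HasLineDerivAt ℝ (U.indicator f) (U.indicator f' x) x v := by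
  by_cases hx : x ∈ U
  · rw [Set.indicator_of_mem hx]
    exact (hd x hx).congr_of_eventuallyEq
      (Filter.eventuallyEq_of_mem (hU.mem_nhds hx) fun z hz => Set.indicator_of_mem hz f)
  · rw [Set.indicator_of_notMem hx]
    refine hasLineDerivAt_zero_of_norm_le_sq (K := |K|) fun z => ?_
    by_cases hz : z ∈ U
    · rw [Set.indicator_of_mem hz]
      exact (hK z hz x hx).trans (by gcongr; exact le_abs_self K)
    · rw [Set.indicator_of_notMem hz, norm_zero]
      positivity

theorem setIntegral_eq_zero_of_hasLineDerivAt [FiniteDimensional ℝ E] [MeasurableSpace E]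
    [BorelSpace E] {μ : Measure E} [μ.IsAddHaarMeasure] (hU : IsOpen U)
    (hf : IntegrableOn f U μ) (hf' : IntegrableOn f' U μ)
    (hd : ∀ z ∈ U, HasLineDerivAt ℝ f (f' z) z v)
    (hK : ∀ z ∈ U, ∀ w ∉ U, ‖f z‖ ≤ K * dist z w ^ 2) : ∫ z in U, f' z ∂μ = 0 := by
  have ibp := integral_bilinear_hasLineDerivAt_right_eq_neg_left_of_integrable (μ := μ)
    (f := fun _ => (1 : ℝ)) (f' := fun _ => 0) (B := ContinuousLinearMap.lsmul ℝ ℝ)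
    (by simp) (by simpa using hf'.integrable_indicator hU.measurableSet)
    (by simpa using hf.integrable_indicator hU.measurableSet)
    (fun x _ => hasDerivAt_const 0 1) (fun x _ => hasLineDerivAt_indicator hU hd hK x)
  simpa [integral_indicator hU.measurableSet] using ibp

end LineDeriv

section ModerateGrowth

open Finset Filter

variable {n : ℕ} {f g : (Fin n → ℝ) → ℂ}

/-- Continuous functions on the ordered simplex that blow up at most polynomially in the inverse
node distances. -/
def HasModerateGrowth (f : (Fin n → ℝ) → ℂ) : Prop :=
  ContinuousOn f (orderedSimplex n) ∧
    ∃ q : ℕ, f =O[𝓟 (orderedSimplex n)] fun y => Real.exp (barrier y) ^ q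

lemma hasModerateGrowth_of_norm_le (hf : ContinuousOn f (orderedSimplex n)) {C : ℝ}
    (hC : ∀ y ∈ orderedSimplex n, ‖f y‖ ≤ C) : HasModerateGrowth f :=
  ⟨hf, 0, .of_bound C (by simpa using hC)⟩

lemma hasModerateGrowth_const (a : ℂ) : HasModerateGrowth fun _ : Fin n → ℝ => a :=
  hasModerateGrowth_of_norm_le continuousOn_const fun _ _ => le_rfl

lemma HasModerateGrowth.mul (hf : HasModerateGrowth f) (hg : HasModerateGrowth g) :
    HasModerateGrowth fun y => f y * g y := by
  obtain ⟨hfc, p, hp⟩ := hf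
  obtain ⟨hgc, q, hq⟩ := hg
  exact ⟨hfc.mul hgc, p + q, by simpa only [pow_add] using hp.mul hq⟩

lemma isBigO_exp_barrier_pow {p q : ℕ} (hpq : p ≤ q) :
    (fun y => Real.exp (barrier y) ^ p) =O[𝓟 (orderedSimplex n)]
      fun y => Real.exp (barrier y) ^ q := by
  refine .of_bound 1 (eventually_principal.2 fun y hy => ?_)
  rw [one_mul, norm_pow, norm_pow]
  exact pow_le_pow_right₀ (by simpa using barrier_nonneg hy) hpq

lemma HasModerateGrowth.add (hf : HasModerateGrowth f) (hg : HasModerateGrowth g) :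
    HasModerateGrowth fun y => f y + g y := by
  obtain ⟨hfc, p, hp⟩ := hf
  obtain ⟨hgc, q, hq⟩ := hg
  exact ⟨hfc.add hgc, max p q, (hp.trans (isBigO_exp_barrier_pow (le_max_left p q))).add
    (hq.trans (isBigO_exp_barrier_pow (le_max_right p q)))⟩

lemma hasModerateGrowth_sum {ι : Type*} {t : Finset ι} {f : ι → (Fin n → ℝ) → ℂ}
    (hf : ∀ i ∈ t, HasModerateGrowth (f i)) : HasModerateGrowth fun y => ∑ i ∈ t, f i y := by
  classical
  induction t using Finset.induction_on with
  | empty => simpa using hasModerateGrowth_const 0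
  | insert i t hi ih =>
    simp only [sum_insert hi]
    exact (hf i (mem_insert_self i t)).add (ih fun j hj => hf j (mem_insert_of_mem hj))

lemma hasModerateGrowth_node_sub (i j : Fin (n + 2)) :
    HasModerateGrowth fun y => ((node y i - node y j : ℝ) : ℂ) := by
  refine hasModerateGrowth_of_norm_le (C := 1) (Continuous.continuousOn ?_) fun y hy => ?_
  · exact continuous_ofReal.comp (((continuous_apply i).comp continuous_node).sub
      ((continuous_apply j).comp continuous_node))
  · rw [norm_real, Real.norm_eq_abs]
    exact abs_node_sub_le_one hy i j

lemma hasModerateGrowth_inv_node_sub (i j : Fin (n + 2)) :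
    HasModerateGrowth fun y => ((node y i - node y j : ℝ) : ℂ)⁻¹ := by
  refine ⟨?_, 1, .of_bound 1 (eventually_principal.2 fun y hy => ?_)⟩
  · obtain rfl | hij := eq_or_ne i j
    · simpa using continuousOn_const
    · exact (hasModerateGrowth_node_sub i j).1.inv₀ fun y hy =>
        ofReal_ne_zero.2 (node_sub_ne_zero hy hij)
  · rw [← ofReal_inv, norm_real, Real.norm_eq_abs]
    simpa using abs_inv_node_sub_le hy i j

lemma hasModerateGrowth_exp_barrier :
    HasModerateGrowth fun y : Fin n → ℝ => (Real.exp (barrier y) : ℂ) :=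
  ⟨continuous_ofReal.comp_continuousOn continuousOn_barrier.rexp, 1,
    .of_bound 1 (.of_forall fun y => by simp)⟩

end ModerateGrowth

section Regularization

open Finset Filter

variable {n : ℕ} {f : (Fin n → ℝ) → ℂ} {s : Exponents n} {ε : ℝ}

/-- The product of powers of node differences with exponents `s`, damped by `exp (-ε exp P)` with
`P` the barrier; the damping beats every moderate growth at the boundary of the simplex. -/
def regularizedKernel (s : Exponents n) (ε : ℝ) (y : Fin n → ℝ) : ℂ :=
  cexp (logForm y s - ε * Real.exp (barrier y))

lemma continuousOn_regularizedKernel (s : Exponents n) (ε : ℝ) :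
    ContinuousOn (regularizedKernel s ε) (orderedSimplex n) :=
  ((continuousOn_logForm_apply s).sub
    (continuousOn_const.mul hasModerateGrowth_exp_barrier.1)).cexp

lemma norm_regularizedKernel (s : Exponents n) (ε : ℝ) (y : Fin n → ℝ) :
    ‖regularizedKernel s ε y‖ =
      Real.exp (logForm y s).re * Real.exp (-(ε * Real.exp (barrier y))) := by
  rw [regularizedKernel, norm_exp, sub_re, ← ofReal_mul, ofReal_re, ← Real.exp_add, sub_eq_add_neg]

lemma exists_pow_mul_exp_neg_mul_le (q : ℕ) (hε : 0 < ε) :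
    ∃ K : ℝ, ∀ x : ℝ, 0 ≤ x → x ^ q * Real.exp (-(ε * x)) ≤ K := by
  refine ⟨q.factorial / ε ^ q, fun x hx => ?_⟩
  have h := Real.pow_div_factorial_le_exp (ε * x) (by positivity) q
  rw [mul_pow, div_le_iff₀ (by positivity)] at h
  rw [Real.exp_neg, ← div_eq_mul_inv, div_le_div_iff₀ (Real.exp_pos _) (by positivity)]
  linarith

lemma HasModerateGrowth.exists_norm_mul_regularizedKernel_le (hf : HasModerateGrowth f)
    (s : Exponents n) (hε : 0 < ε) : ∃ K : ℝ, ∀ y ∈ orderedSimplex n,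
      ‖f y * regularizedKernel s ε y‖ ≤ K * Real.exp (-barrier y) ^ 2 := by
  obtain ⟨-, q, hq⟩ := hf
  obtain ⟨C, hC0, hC⟩ := hq.exists_nonneg
  obtain ⟨N, hN⟩ := exists_nat_ge ‖s‖
  obtain ⟨K, hK⟩ := exists_pow_mul_exp_neg_mul_le (q + N + 2) hε
  refine ⟨C * K, fun y hy => ?_⟩
  set X := Real.exp (barrier y) with hX
  have hX0 : 0 < X := Real.exp_pos _
  have hfy : ‖f y‖ ≤ C * X ^ q := by simpa [hX] using Asymptotics.isBigOWith_principal.1 hC y hy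
  have hsy : Real.exp (logForm y s).re ≤ X ^ N := by
    rw [hX, ← Real.exp_nat_mul, Real.exp_le_exp]
    exact (re_logForm_le hy s).trans (mul_le_mul_of_nonneg_right hN (barrier_nonneg hy))
  rw [norm_mul, norm_regularizedKernel, Real.exp_neg (barrier y), ← hX]
  calc ‖f y‖ * (Real.exp (logForm y s).re * Real.exp (-(ε * X)))
      ≤ C * X ^ q * (X ^ N * Real.exp (-(ε * X))) := by gcongr
    _ = C * (X ^ (q + N + 2) * Real.exp (-(ε * X))) * X⁻¹ ^ 2 := by field_simp; ring
    _ ≤ C * K * X⁻¹ ^ 2 := by gcongr; exact hK X hX0.le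

lemma HasModerateGrowth.integrableOn_mul_regularizedKernel (hf : HasModerateGrowth f)
    (s : Exponents n) (hε : 0 < ε) :
    IntegrableOn (fun y => f y * regularizedKernel s ε y) (orderedSimplex n) := by
  obtain ⟨K, hK⟩ := hf.exists_norm_mul_regularizedKernel_le s hε
  have hm := (isOpen_orderedSimplex n).measurableSet
  refine .of_bound (C := |K|) (volume_orderedSimplex_lt_top n)
    ((hf.1.mul (continuousOn_regularizedKernel s ε)).aestronglyMeasurable hm)
    ((ae_restrict_iff' hm).2 (.of_forall fun y hy => (hK y hy).trans ?_))
  have hexp : Real.exp (-barrier y) ≤ 1 := Real.exp_le_one_iff.2 (neg_nonpos.2 (barrier_nonneg hy))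
  calc K * Real.exp (-barrier y) ^ 2 ≤ |K| * 1 ^ 2 := by gcongr; exact le_abs_self K
    _ = |K| := by ring

lemma HasModerateGrowth.exists_norm_mul_regularizedKernel_le_dist (hf : HasModerateGrowth f)
    (s : Exponents n) (hε : 0 < ε) : ∃ K : ℝ, ∀ z ∈ orderedSimplex n, ∀ w ∉ orderedSimplex n,
      ‖f z * regularizedKernel s ε z‖ ≤ K * dist z w ^ 2 := by
  obtain ⟨K, hK⟩ := hf.exists_norm_mul_regularizedKernel_le s hε
  refine ⟨|K| * 2 ^ 2, fun z hz w hw => (hK z hz).trans ?_⟩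
  calc K * Real.exp (-barrier z) ^ 2 ≤ |K| * (2 * dist z w) ^ 2 := by
        gcongr
        · exact le_abs_self K
        · exact exp_neg_barrier_le_dist hz hw
    _ = |K| * 2 ^ 2 * dist z w ^ 2 := by ring

end Regularization

section IntegrationByParts

open Finset Filter

variable {n : ℕ} {y : Fin n → ℝ} {s : Exponents n} {ε : ℝ}

/-- The derivative of `logForm y s` when the nodes move with velocities `w`. -/
def logFormDeriv (s : Exponents n) (y : Fin n → ℝ) : (Fin (n + 2) → ℂ) →ₗ[ℂ] ℂ :=
  ∑ i, ∑ j, (s i j * ((node y i - node y j : ℝ) : ℂ)⁻¹) •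
    (LinearMap.proj (R := ℂ) (φ := fun _ => ℂ) i - LinearMap.proj j)

lemma logFormDeriv_apply (s : Exponents n) (y : Fin n → ℝ) (w : Fin (n + 2) → ℂ) :
    logFormDeriv s y w =
      ∑ i, ∑ j, s i j * ((w i - w j) * ((node y i - node y j : ℝ) : ℂ)⁻¹) := by
  simp only [logFormDeriv, LinearMap.sum_apply, LinearMap.smul_apply, LinearMap.sub_apply,
    LinearMap.proj_apply, smul_eq_mul, mul_assoc, mul_comm (_⁻¹)]

lemma hasLineDerivAt_logDist (hy : y ∈ orderedSimplex n) (i j : Fin (n + 2)) (k : Fin n) :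
    HasLineDerivAt ℝ (fun z => logDist z i j)
      (((Pi.single k.castSucc.succ 1 : Fin (n + 2) → ℝ) i -
        (Pi.single k.castSucc.succ 1 : Fin (n + 2) → ℝ) j) * (node y i - node y j)⁻¹)
      y (Pi.single k 1) := by
  set δ : Fin (n + 2) → ℝ := Pi.single k.castSucc.succ 1
  have hline (t : ℝ) : logDist (y + t • Pi.single k 1) i j =
      Real.log (node y i - node y j + t * (δ i - δ j)) := by
    rw [logDist, node_add_smul_single]
    congr 1
    simp only [Pi.add_apply, Pi.smul_apply, smul_eq_mul, δ]
    ring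
  simp only [HasLineDerivAt, hline]
  obtain rfl | hij := eq_or_ne i j
  · simpa using hasDerivAt_const (0 : ℝ) (0 : ℝ)
  · have := (((hasDerivAt_id (0 : ℝ)).mul_const (δ i - δ j)).const_add (node y i - node y j)).log
      (by simpa using node_sub_ne_zero hy hij)
    simpa [div_eq_mul_inv] using this

lemma hasLineDerivAt_logForm (hy : y ∈ orderedSimplex n) (s : Exponents n) (k : Fin n) :
    HasLineDerivAt ℝ (fun z => logForm z s) (logFormDeriv s y (Pi.single k.castSucc.succ 1)) y
      (Pi.single k 1) := by
  have hcast (i : Fin (n + 2)) : (Pi.single k.castSucc.succ 1 : Fin (n + 2) → ℂ) i =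
      ((Pi.single k.castSucc.succ 1 : Fin (n + 2) → ℝ) i : ℂ) := by
    simp [Pi.single_apply, apply_ite]
  simp only [HasLineDerivAt, logForm_apply, logFormDeriv_apply, hcast]
  refine HasDerivAt.fun_sum fun i _ => HasDerivAt.fun_sum fun j _ => ?_
  have h := ((hasLineDerivAt_logDist hy i j k).ofReal_comp).const_mul (s i j)
  push_cast at h ⊢
  exact h

lemma hasLineDerivAt_regularizedKernel (hy : y ∈ orderedSimplex n) (s : Exponents n) (ε : ℝ)
    (k : Fin n) :
    HasLineDerivAt ℝ (regularizedKernel s ε)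
      ((logFormDeriv s y (Pi.single k.castSucc.succ 1) +
        ε * Real.exp (barrier y) * logFormDeriv 1 y (Pi.single k.castSucc.succ 1)) *
          regularizedKernel s ε y) y (Pi.single k 1) := by
  have hkernel (z : Fin n → ℝ) :
      regularizedKernel s ε z = cexp (logForm z s - ε * cexp (-logForm z 1)) := by
    rw [regularizedKernel, logForm_one, neg_neg, ofReal_exp]
  have hexp : (Real.exp (barrier y) : ℂ) = cexp (-logForm y 1) := by
    rw [logForm_one, neg_neg, ofReal_exp]
  have hs : HasDerivAt _ _ _ := hasLineDerivAt_logForm hy s k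
  have h1 : HasDerivAt _ _ _ := hasLineDerivAt_logForm hy 1 k
  have := (hs.fun_sub ((h1.fun_neg.cexp).const_mul (ε : ℂ))).cexp
  simp only [zero_smul, add_zero] at this
  simp only [HasLineDerivAt, hkernel, hexp]
  convert! this using 1
  ring

lemma hasModerateGrowth_logFormDeriv (s : Exponents n) (w : Fin (n + 2) → ℂ) :
    HasModerateGrowth fun y => logFormDeriv s y w := by
  simp only [logFormDeriv_apply]
  exact hasModerateGrowth_sum fun i _ => hasModerateGrowth_sum fun j _ =>
    (hasModerateGrowth_const _).mul
      ((hasModerateGrowth_const _).mul (hasModerateGrowth_inv_node_sub i j))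

/-- The divergence of a vector field `V` on the nodes, with diagonal partial derivatives `V'`, times
the product of powers of node differences with exponents `s`, divided by that product. -/
def kernelDivergence (V V' : (Fin n → ℝ) → Fin (n + 2) → ℂ) (s : Exponents n) (y : Fin n → ℝ) : ℂ :=
  ∑ i, V' y i + logFormDeriv s y (V y)

/-- `V` is a vector field moving the nodes `1, y_1, …, y_n, 0` which fixes the two endpoints, and
`V'` are its diagonal partial derivatives; the divergence `kernelDivergence V V' s` is required to
be bounded for all `s`. -/
structure IsBoundedNodeField (V V' : (Fin n → ℝ) → Fin (n + 2) → ℂ) : Prop where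
  zero : ∀ y, V y 0 = 0 ∧ V' y 0 = 0
  last : ∀ y, V y (Fin.last (n + 1)) = 0 ∧ V' y (Fin.last (n + 1)) = 0
  growth : ∀ i, HasModerateGrowth fun y => V y i
  growth_deriv : ∀ i, HasModerateGrowth fun y => V' y i
  hasLineDerivAt : ∀ k : Fin n, ∀ y ∈ orderedSimplex n,
    HasLineDerivAt ℝ (fun z => V z k.castSucc.succ) (V' y k.castSucc.succ) y (Pi.single k 1)
  bounded : ∀ s : Exponents n, ∃ B : ℝ, ∀ y ∈ orderedSimplex n, ‖kernelDivergence V V' s y‖ ≤ B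

namespace IsBoundedNodeField

variable {V V' : (Fin n → ℝ) → Fin (n + 2) → ℂ}

/-- The analogue of `kernelDivergence` for the regularized kernel. -/
def regularizedDivergence (V V' : (Fin n → ℝ) → Fin (n + 2) → ℂ) (s : Exponents n) (ε : ℝ)
    (y : Fin n → ℝ) : ℂ :=
  kernelDivergence V V' s y + ε * Real.exp (barrier y) * logFormDeriv 1 y (V y)

lemma sum_castSucc_succ {g : Fin (n + 2) → ℂ} (h0 : g 0 = 0) (hl : g (Fin.last (n + 1)) = 0) :
    ∑ k : Fin n, g k.castSucc.succ = ∑ i, g i := by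
  rw [sum_univ_node_index, h0, hl, zero_add, add_zero]

lemma sum_mul_logFormDeriv_single (hV : IsBoundedNodeField V V') (s : Exponents n)
    (y : Fin n → ℝ) :
    ∑ k : Fin n, V y k.castSucc.succ * logFormDeriv s y (Pi.single k.castSucc.succ 1) =
      logFormDeriv s y (V y) := by
  rw [sum_castSucc_succ (g := fun i => V y i * logFormDeriv s y (Pi.single i 1))
    (by simp [hV.zero]) (by simp [hV.last])]
  conv_rhs => rw [pi_eq_sum_univ' (V y), map_sum]
  exact sum_congr rfl fun i _ => by rw [map_smul, smul_eq_mul]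

lemma integral_coordinate_eq_zero (hV : IsBoundedNodeField V V') (s : Exponents n) (hε : 0 < ε)
    (k : Fin n) :
    let G : (Fin n → ℝ) → ℂ := fun y => V' y k.castSucc.succ + V y k.castSucc.succ *
      (logFormDeriv s y (Pi.single k.castSucc.succ 1) +
        ε * Real.exp (barrier y) * logFormDeriv 1 y (Pi.single k.castSucc.succ 1))
    IntegrableOn (fun y => G y * regularizedKernel s ε y) (orderedSimplex n) ∧
      ∫ y in orderedSimplex n, G y * regularizedKernel s ε y = 0 := by
  intro G
  have hG : HasModerateGrowth G := (hV.growth_deriv _).add <| (hV.growth _).mul <|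
    (hasModerateGrowth_logFormDeriv s _).add <|
      ((hasModerateGrowth_const _).mul hasModerateGrowth_exp_barrier).mul
        (hasModerateGrowth_logFormDeriv 1 _)
  have hGint := hG.integrableOn_mul_regularizedKernel s hε
  obtain ⟨K, hK⟩ := (hV.growth k.castSucc.succ).exists_norm_mul_regularizedKernel_le_dist s hε
  refine ⟨hGint, setIntegral_eq_zero_of_hasLineDerivAt (isOpen_orderedSimplex n)
    ((hV.growth k.castSucc.succ).integrableOn_mul_regularizedKernel s hε) hGint
    (v := Pi.single k 1) (fun y hy => ?_) hK⟩
  have hV_deriv : HasDerivAt _ _ _ := hV.hasLineDerivAt k y hy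
  have hkernel_deriv : HasDerivAt _ _ _ := hasLineDerivAt_regularizedKernel hy s ε k
  have h := hV_deriv.mul hkernel_deriv
  simp only [zero_smul, add_zero] at h
  rw [HasLineDerivAt]
  convert! h using 1
  simp only [G]
  ring

lemma integral_regularizedDivergence_eq_zero (hV : IsBoundedNodeField V V') (s : Exponents n)
    (hε : 0 < ε) :
    ∫ y in orderedSimplex n, regularizedDivergence V V' s ε y * regularizedKernel s ε y = 0 := by
  have hsum (y : Fin n → ℝ) : regularizedDivergence V V' s ε y * regularizedKernel s ε y =
      ∑ k : Fin n, (V' y k.castSucc.succ + V y k.castSucc.succ *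
        (logFormDeriv s y (Pi.single k.castSucc.succ 1) +
          ε * Real.exp (barrier y) * logFormDeriv 1 y (Pi.single k.castSucc.succ 1))) *
        regularizedKernel s ε y := by
    rw [regularizedDivergence, kernelDivergence, ← hV.sum_mul_logFormDeriv_single,
      ← hV.sum_mul_logFormDeriv_single, ← sum_castSucc_succ (hV.zero y).2 (hV.last y).2,
      mul_sum, ← sum_add_distrib, ← sum_add_distrib, sum_mul]
    exact sum_congr rfl fun k _ => by ring
  simp only [hsum]
  rw [integral_finsetSum _ fun k _ => (hV.integral_coordinate_eq_zero s hε k).1]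
  exact sum_eq_zero fun k _ => (hV.integral_coordinate_eq_zero s hε k).2

lemma continuousOn_logFormDeriv (hV : IsBoundedNodeField V V') (s : Exponents n) :
    ContinuousOn (fun y => logFormDeriv s y (V y)) (orderedSimplex n) := by
  simp only [← hV.sum_mul_logFormDeriv_single]
  exact continuousOn_finsetSum _ fun k _ =>
    ((hV.growth _).mul (hasModerateGrowth_logFormDeriv s _)).1

lemma continuousOn_regularizedDivergence (hV : IsBoundedNodeField V V') (s : Exponents n) (ε : ℝ) :
    ContinuousOn (regularizedDivergence V V' s ε) (orderedSimplex n) :=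
  ((hasModerateGrowth_sum fun i _ => hV.growth_deriv i).1.add
    (hV.continuousOn_logFormDeriv s)).add <|
      (continuousOn_const.mul hasModerateGrowth_exp_barrier.1).mul (hV.continuousOn_logFormDeriv 1)

lemma exists_norm_logFormDeriv_one_le (hV : IsBoundedNodeField V V') :
    ∃ B : ℝ, ∀ y ∈ orderedSimplex n, ‖logFormDeriv 1 y (V y)‖ ≤ B := by
  obtain ⟨B₀, hB₀⟩ := hV.bounded 0
  obtain ⟨B₁, hB₁⟩ := hV.bounded 1
  refine ⟨B₁ + B₀, fun y hy => ?_⟩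
  have hdiff : logFormDeriv 1 y (V y) = kernelDivergence V V' 1 y - kernelDivergence V V' 0 y := by
    simp [kernelDivergence, logFormDeriv_apply]
  rw [hdiff]
  exact norm_sub_le_of_le (hB₁ y hy) (hB₀ y hy)

/- The factor `ε exp P` that the damping contributes to the divergence is absorbed by the damping
itself, because `x exp (-x) ≤ 1`. -/
lemma exists_norm_regularizedDivergence_mul_le (hV : IsBoundedNodeField V V') (s : Exponents n) :
    ∃ B : ℝ, ∀ ε > 0, ∀ y ∈ orderedSimplex n,
      ‖regularizedDivergence V V' s ε y * regularizedKernel s ε y‖ ≤ ‖cexp (logForm y s)‖ * B := by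
  obtain ⟨B, hB⟩ := hV.bounded s
  obtain ⟨B₁, hB₁⟩ := hV.exists_norm_logFormDeriv_one_le
  refine ⟨B + B₁, fun ε hε y hy => ?_⟩
  set x := ε * Real.exp (barrier y) with hx
  have hx0 : 0 < x := by positivity
  have hB_nonneg : 0 ≤ B := (norm_nonneg _).trans (hB y hy)
  have hB₁_nonneg : 0 ≤ B₁ := (norm_nonneg _).trans (hB₁ y hy)
  have hdiv : ‖regularizedDivergence V V' s ε y‖ ≤ B + x * B₁ := by
    refine norm_add_le_of_le (hB y hy) ?_
    rw [← ofReal_mul, ← hx, norm_mul, norm_real, Real.norm_of_nonneg hx0.le]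
    gcongr
    exact hB₁ y hy
  have hexp : Real.exp (-x) ≤ 1 := Real.exp_le_one_iff.2 (neg_nonpos.2 hx0.le)
  have hxexp : x * Real.exp (-x) ≤ 1 := by
    rw [Real.exp_neg, ← div_eq_mul_inv, div_le_one (Real.exp_pos x)]
    linarith [Real.add_one_le_exp x]
  rw [norm_mul, norm_regularizedKernel, ← hx, norm_exp]
  calc ‖regularizedDivergence V V' s ε y‖ * (Real.exp (logForm y s).re * Real.exp (-x))
      ≤ (B + x * B₁) * (Real.exp (logForm y s).re * Real.exp (-x)) := by gcongr
    _ = Real.exp (logForm y s).re * (Real.exp (-x) * B + x * Real.exp (-x) * B₁) := by ring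
    _ ≤ Real.exp (logForm y s).re * (1 * B + 1 * B₁) := by gcongr
    _ = Real.exp (logForm y s).re * (B + B₁) := by ring

theorem integral_divergence_eq_zero (hV : IsBoundedNodeField V V')
    (hs : IntegrableOn (fun y => cexp (logForm y s)) (orderedSimplex n)) :
    ∫ y in orderedSimplex n, kernelDivergence V V' s y * cexp (logForm y s) = 0 := by
  obtain ⟨B, hB⟩ := hV.exists_norm_regularizedDivergence_mul_le s
  have hm := (isOpen_orderedSimplex n).measurableSet
  have hε_pos (N : ℕ) : 0 < 1 / ((N : ℝ) + 1) := Nat.one_div_pos_of_nat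
  have hlim : Tendsto (fun N : ℕ => ∫ y in orderedSimplex n,
      regularizedDivergence V V' s (1 / ((N : ℝ) + 1)) y *
        regularizedKernel s (1 / ((N : ℝ) + 1)) y) atTop
      (nhds (∫ y in orderedSimplex n,
        kernelDivergence V V' s y * cexp (logForm y s))) := by
    refine tendsto_integral_of_dominated_convergence (fun y => ‖cexp (logForm y s)‖ * B)
      (fun N => ?_) (hs.norm.mul_const B) (fun N => ?_) (.of_forall fun y => ?_)
    · exact ((hV.continuousOn_regularizedDivergence s _).mul
        (continuousOn_regularizedKernel s _)).aestronglyMeasurable hm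
    · exact (ae_restrict_iff' hm).2 (.of_forall (hB _ (hε_pos N)))
    · have hcont : Continuous fun ε : ℝ =>
          regularizedDivergence V V' s ε y * regularizedKernel s ε y := by
        unfold regularizedDivergence regularizedKernel
        fun_prop
      simpa [regularizedDivergence, regularizedKernel, Function.comp_def] using
        (hcont.tendsto 0).comp tendsto_one_div_add_atTop_nhds_zero_nat
  simp only [hV.integral_regularizedDivergence_eq_zero s (hε_pos _)] at hlim
  exact tendsto_nhds_unique hlim tendsto_const_nhds

end IsBoundedNodeField

end IntegrationByParts

section Shifts

open Finset

variable {n : ℕ} {y : Fin n → ℝ}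

/-- The group of exponent matrices with integer entries. -/
def integerExponents (n : ℕ) : AddSubgroup (Exponents n) :=
  .pi Set.univ fun _ => .pi Set.univ fun _ => (Int.castAddHom ℂ).range

/-- Integer exponents `m` whose product of powers of node differences is dominated by `exp φ`. -/
def shiftsBelow (φ : (Fin n → ℝ) → ℝ) : Set (Exponents n) :=
  {m | m ∈ integerExponents n ∧ ∀ y ∈ orderedSimplex n, (logForm y m).re ≤ φ y}

/-- Integer exponents whose product of powers of node differences is dominated by the ratio of the
diameter of the cluster `uIcc c e` to that of some strictly larger cluster. -/
def gainShifts (c e : Fin (n + 2)) : Set (Exponents n) :=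
  {m | ∃ c' e', uIcc c e ⊂ uIcc c' e' ∧ m ∈ shiftsBelow fun y => logDist y c e - logDist y c' e'}

lemma mem_integerExponents {m : Exponents n} :
    m ∈ integerExponents n ↔ ∀ i j, ∃ z : ℤ, m i j = z := by
  simp [integerExponents, AddSubgroup.mem_pi, AddSubgroup.mem_zmultiples_iff, eq_comm]

lemma add_mem_shiftsBelow {φ ψ : (Fin n → ℝ) → ℝ} {m k : Exponents n} (hm : m ∈ shiftsBelow φ)
    (hk : k ∈ shiftsBelow ψ) : m + k ∈ shiftsBelow (φ + ψ) :=
  ⟨add_mem hm.1 hk.1, fun y hy => by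
    rw [map_add, add_re]; exact add_le_add (hm.2 y hy) (hk.2 y hy)⟩

lemma shiftsBelow_mono {φ ψ : (Fin n → ℝ) → ℝ} (h : ∀ y ∈ orderedSimplex n, φ y ≤ ψ y) :
    shiftsBelow φ ⊆ shiftsBelow ψ :=
  fun _ hm => ⟨hm.1, fun y hy => (hm.2 y hy).trans (h y hy)⟩

lemma gainShifts_subset {c e : Fin (n + 2)} (hce : c ≠ e) : gainShifts c e ⊆ shiftsBelow 0 := by
  rintro m ⟨c', e', hlt, hm⟩
  exact shiftsBelow_mono (fun y hy => sub_nonpos.2 (logDist_le_logDist hy hce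
    (hlt.1 left_mem_uIcc) (hlt.1 right_mem_uIcc))) hm

/-- The exponent matrix of the single factor `|x_i - x_j|`. -/
def pairExponent (i j : Fin (n + 2)) : Exponents n := Pi.single i (Pi.single j 1)

/-- The sign of the node difference `x_i - x_j` on the ordered simplex, for `i ≠ j`. -/
def nodeSign (i j : Fin (n + 2)) : ℂ := if i < j then 1 else -1

lemma pairExponent_mem (i j : Fin (n + 2)) : pairExponent i j ∈ integerExponents n := by
  refine mem_integerExponents.2 fun k l => ⟨if k = i ∧ l = j then 1 else 0, ?_⟩
  by_cases hk : k = i <;> by_cases hl : l = j <;> simp [pairExponent, hk, hl]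

lemma logForm_pairExponent (y : Fin n → ℝ) (i j : Fin (n + 2)) :
    logForm y (pairExponent i j) = logDist y i j := by
  rw [pairExponent, logForm_apply, sum_eq_single i (fun k _ hk => by simp [hk]) (by simp),
    sum_eq_single j (fun k _ hk => by simp [hk]) (by simp)]
  simp

lemma node_sub_eq (hy : y ∈ orderedSimplex n) {i j : Fin (n + 2)} (hij : i ≠ j) :
    ((node y i - node y j : ℝ) : ℂ) = nodeSign i j * cexp (logForm y (pairExponent i j)) := by
  rw [logForm_pairExponent, ← ofReal_exp, exp_logDist hy hij, nodeSign]
  have anti := mem_orderedSimplex_iff.1 hy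
  obtain hlt | hlt := hij.lt_or_gt
  · rw [if_pos hlt, abs_of_pos (sub_pos.2 (anti hlt)), one_mul]
  · rw [if_neg hlt.not_gt, abs_of_neg (sub_neg.2 (anti hlt)), ofReal_neg]
    ring

lemma inv_node_sub_eq (hy : y ∈ orderedSimplex n) {i j : Fin (n + 2)} (hij : i ≠ j) :
    ((node y i - node y j : ℝ) : ℂ)⁻¹ = nodeSign i j * cexp (logForm y (-pairExponent i j)) := by
  have hsign : (nodeSign i j)⁻¹ = nodeSign i j := by
    unfold nodeSign; split_ifs <;> norm_num
  rw [node_sub_eq hy hij, mul_inv, hsign, map_neg, Complex.exp_neg]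

/-- The exponent `∑_{i ≠ j ∈ J} s_ij` with which the integrand scales when the nodes with index in
`J` are contracted to a point. -/
def clusterExponent (J : Finset (Fin (n + 2))) (s : Exponents n) : ℂ :=
  ∑ q ∈ J.offDiag, s q.1 q.2

lemma clusterExponent_eq_sum_ite (J : Finset (Fin (n + 2))) (s : Exponents n) :
    clusterExponent J s = ∑ i, ∑ j, if (i ∈ J ∧ j ∈ J) ∧ i ≠ j then s i j else 0 := by
  rw [← sum_product', univ_product_univ, ← sum_filter]
  exact sum_congr (by ext; simp [mem_offDiag, and_assoc]) fun _ _ => rfl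

end Shifts

section Dilation

open Finset

variable {n : ℕ} {y : Fin n → ℝ} {c e o i j : Fin (n + 2)}

/-- The index `o` is the neighbour of the cluster `uIcc c e` on the side of its end `e`. -/
def IsNeighbour (c e o : Fin (n + 2)) : Prop := (c < e ∧ e ⋖ o) ∨ (e < c ∧ o ⋖ e)

/-- The position of the node `i` relative to `c`, in units of the distance from `o` to `c`. -/
def relPos (c o : Fin (n + 2)) (y : Fin n → ℝ) (i : Fin (n + 2)) : ℂ :=
  ((node y i - node y c : ℝ) : ℂ) * ((node y c - node y o : ℝ) : ℂ)⁻¹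

/-- The vector field `(x_i - x_c) (x_i - x_o) / (x_c - x_o)` on the cluster `uIcc c e`: near `c` it
is the dilation with centre `c`, but it is cut off so as to keep `o` fixed. -/
def dilation (c e o : Fin (n + 2)) (y : Fin n → ℝ) (i : Fin (n + 2)) : ℂ :=
  if i ∈ uIcc c e then relPos c o y i * ((node y i - node y o : ℝ) : ℂ) else 0

/-- The diagonal partial derivatives of `dilation`. -/
def dilationDeriv (c e o : Fin (n + 2)) (y : Fin n → ℝ) (i : Fin (n + 2)) : ℂ :=
  if i ∈ (uIcc c e).erase c then 1 + 2 * relPos c o y i else 0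

/-- The contribution of the motion of `i` to the deviation of the logarithmic derivative of
`x_i - x_j` along `dilation` from that along an exact dilation of the cluster. -/
def dilationError (c e o : Fin (n + 2)) (y : Fin n → ℝ) (i j : Fin (n + 2)) : ℂ :=
  if i ∈ uIcc c e then
    if j ∈ uIcc c e then relPos c o y i
    else relPos c o y i * (((node y i - node y o : ℝ) : ℂ) * ((node y i - node y j : ℝ) : ℂ)⁻¹)
  else 0

lemma IsNeighbour.notMem (h : IsNeighbour c e o) : o ∉ uIcc c e := by
  rw [mem_uIcc]
  obtain ⟨hce, ho⟩ | ⟨hce, ho⟩ := h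
  · rw [sup_of_le_right hce.le]; exact fun hmem => hmem.2.not_gt ho.lt
  · rw [inf_of_le_right hce.le]; exact fun hmem => hmem.1.not_gt ho.lt

lemma IsNeighbour.pivot_ne (h : IsNeighbour c e o) : c ≠ o :=
  fun hco => h.notMem (hco ▸ left_mem_uIcc)

lemma IsNeighbour.subset (h : IsNeighbour c e o) : uIcc c e ⊆ uIcc c o := by
  refine uIcc_subset_uIcc left_mem_uIcc (mem_uIcc.2 ?_)
  obtain ⟨hce, ho⟩ | ⟨hce, ho⟩ := h
  · exact ⟨inf_le_left.trans hce.le, ho.le.trans le_sup_right⟩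
  · exact ⟨inf_le_right.trans ho.le, hce.le.trans le_sup_left⟩

lemma IsNeighbour.ssubset (h : IsNeighbour c e o) : uIcc c e ⊂ uIcc c o :=
  Finset.ssubset_iff_subset_ne.2 ⟨h.subset, fun heq => h.notMem (heq ▸ right_mem_uIcc)⟩

lemma IsNeighbour.mem_uIcc_or (h : IsNeighbour c e o) (hi : i ∈ uIcc c e) (hj : j ∉ uIcc c e) :
    o ∈ uIcc i j ∨ (c ∈ uIcc i j ∧ c ∈ uIcc e j) := by
  simp only [IsNeighbour, Fin.covBy_iff, Nat.covBy_iff_add_one_eq, mem_uIcc] at *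
  grind

@[simp] lemma relPos_pivot (c o : Fin (n + 2)) (y : Fin n → ℝ) : relPos c o y c = 0 := by
  simp [relPos]

lemma dilation_sub_mul_inv (hy : y ∈ orderedSimplex n) (hco : c ≠ o) (hij : i ≠ j) :
    (dilation c e o y i - dilation c e o y j) * ((node y i - node y j : ℝ) : ℂ)⁻¹ =
      (if i ∈ uIcc c e ∧ j ∈ uIcc c e then 1 else 0) + dilationError c e o y i j +
        dilationError c e o y j i := by
  have hij' : (node y i - node y j : ℂ) ≠ 0 := mod_cast node_sub_ne_zero hy hij
  have hji' : (node y j - node y i : ℂ) ≠ 0 := mod_cast node_sub_ne_zero hy hij.symm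
  have hco' : (node y c - node y o : ℂ) ≠ 0 := mod_cast node_sub_ne_zero hy hco
  by_cases hi : i ∈ uIcc c e <;> by_cases hj : j ∈ uIcc c e <;>
    simp only [dilation, dilationError, relPos, hi, hj, if_true, if_false, and_true, and_false,
      and_self, ofReal_sub] <;> field_simp <;> ring

/-- The coefficient of `dilationError c e o y i j` in the divergence of `dilation`; the diagonal
collects the partial derivatives of the field itself. -/
def errorWeight (s : Exponents n) (i j : Fin (n + 2)) : ℂ := if i = j then 2 else s i j + s j i

lemma sum_dilationDeriv (c e o : Fin (n + 2)) (y : Fin n → ℝ) :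
    ∑ i, dilationDeriv c e o y i = #(uIcc c e) - 1 + ∑ i, 2 * dilationError c e o y i i := by
  have herror :
      ∑ i, 2 * dilationError c e o y i i = ∑ i ∈ (uIcc c e).erase c, 2 * relPos c o y i := by
    rw [sum_erase _ (by rw [relPos_pivot, mul_zero]), ← univ_inter (uIcc c e), ← sum_ite_mem]
    exact sum_congr rfl fun i _ => by unfold dilationError; split_ifs <;> simp
  rw [herror]
  simp only [dilationDeriv]
  rw [sum_ite_mem, univ_inter, sum_add_distrib, sum_const, card_erase_of_mem left_mem_uIcc,
    nsmul_one, Nat.cast_pred (card_pos.2 ⟨c, left_mem_uIcc⟩)]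

lemma logFormDeriv_dilation (hy : y ∈ orderedSimplex n) (hco : c ≠ o) (s : Exponents n) :
    logFormDeriv s y (dilation c e o y) = clusterExponent (uIcc c e) s +
      ∑ i, ∑ j, if i = j then 0 else (s i j + s j i) * dilationError c e o y i j := by
  have hterm (i j : Fin (n + 2)) :
      s i j * ((dilation c e o y i - dilation c e o y j) * ((node y i - node y j : ℝ) : ℂ)⁻¹) =
        (if (i ∈ uIcc c e ∧ j ∈ uIcc c e) ∧ i ≠ j then s i j else 0) +
          (if i = j then 0 else s i j * dilationError c e o y i j) +
            (if j = i then 0 else s i j * dilationError c e o y j i) := by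
    obtain rfl | hij := eq_or_ne i j
    · simp
    · rw [dilation_sub_mul_inv hy hco hij, if_neg hij, if_neg hij.symm]
      simp only [hij, ne_eq, not_false_iff, and_true]
      split_ifs <;> ring
  rw [logFormDeriv_apply, clusterExponent_eq_sum_ite]
  simp only [hterm, sum_add_distrib]
  rw [add_assoc, sum_comm (f := fun i j => if j = i then 0 else s i j * dilationError c e o y j i)]
  simp only [← sum_add_distrib]
  refine sum_congr rfl fun i _ => sum_congr rfl fun j _ => ?_
  split_ifs <;> ring

lemma kernelDivergence_dilation (hy : y ∈ orderedSimplex n) (hco : c ≠ o) (s : Exponents n) :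
    kernelDivergence (dilation c e o) (dilationDeriv c e o) s y =
      #(uIcc c e) - 1 + clusterExponent (uIcc c e) s +
        ∑ i, ∑ j, errorWeight s i j * dilationError c e o y i j := by
  have hsplit (i : Fin (n + 2)) : ∑ j, errorWeight s i j * dilationError c e o y i j =
      2 * dilationError c e o y i i +
        ∑ j, if i = j then 0 else (s i j + s j i) * dilationError c e o y i j := by
    have hdiag : 2 * dilationError c e o y i i =
        ∑ j, if i = j then 2 * dilationError c e o y i j else 0 := by simp
    rw [hdiag, ← sum_add_distrib]
    exact sum_congr rfl fun j _ => by unfold errorWeight; split_ifs <;> ring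
  rw [kernelDivergence, sum_dilationDeriv, logFormDeriv_dilation hy hco]
  simp only [hsplit, sum_add_distrib]
  ring

lemma logDist_add_logDist_le (hy : y ∈ orderedSimplex n) (hi : i ∈ uIcc c e) (hic : i ≠ c)
    (hcij : c ∈ uIcc i j) (hcej : c ∈ uIcc e j) (hj : j ∉ uIcc c e) :
    logDist y i c + logDist y j e ≤ logDist y c e + logDist y i j := by
  have hij : i ≠ j := fun h => hj (h ▸ hi)
  have hje : j ≠ e := fun h => hj (h ▸ right_mem_uIcc)
  have hce : c ≠ e := by
    rintro rfl
    exact hic (by simpa using hi)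
  rw [← Real.exp_le_exp, Real.exp_add, Real.exp_add, exp_logDist hy hic, exp_logDist hy hje,
    exp_logDist hy hce, exp_logDist hy hij]
  have hadd {u v : Fin (n + 2)} (hmem : c ∈ uIcc u v) :
      |node y u - node y v| = |node y u - node y c| + |node y c - node y v| := by
    have := ((mem_orderedSimplex_iff.1 hy).antitone.antitoneOn _).mapsTo_uIcc
      (coe_uIcc u v ▸ mem_coe.2 hmem)
    rw [Set.mem_uIcc] at this
    grind
  have hle : |node y i - node y c| ≤ |node y c - node y e| := abs_node_sub_le hy hi left_mem_uIcc
  rw [hadd hcij, abs_sub_comm (node y j), hadd hcej, abs_sub_comm (node y e)]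
  nlinarith [abs_nonneg (node y c - node y j)]

lemma pairExponent_sub_mem_gainShifts (h : IsNeighbour c e o) (hi : i ∈ uIcc c e) (hic : i ≠ c) :
    pairExponent i c - pairExponent c o ∈ gainShifts c e := by
  refine ⟨c, o, h.ssubset, sub_mem (pairExponent_mem _ _) (pairExponent_mem _ _), fun y hy => ?_⟩
  simp only [map_sub, logForm_pairExponent, sub_re, ofReal_re]
  exact sub_le_sub_right (logDist_le_logDist hy hic hi left_mem_uIcc) _

lemma pairExponent_add_mem_gainShifts (h : IsNeighbour c e o) (hi : i ∈ uIcc c e) (hic : i ≠ c)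
    (hj : j ∉ uIcc c e) :
    pairExponent i c - pairExponent c o + (pairExponent i o - pairExponent i j) ∈
      gainShifts c e := by
  have hint : pairExponent i c - pairExponent c o + (pairExponent i o - pairExponent i j) ∈
      integerExponents n := by
    exact add_mem (sub_mem (pairExponent_mem _ _) (pairExponent_mem _ _))
      (sub_mem (pairExponent_mem _ _) (pairExponent_mem _ _))
  have hio : i ≠ o := fun hio => h.notMem (hio ▸ hi)
  obtain ho | ⟨hcij, hcej⟩ := h.mem_uIcc_or hi hj
  · refine ⟨c, o, h.ssubset, hint, fun y hy => ?_⟩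
    simp only [map_add, map_sub, logForm_pairExponent, add_re, sub_re, ofReal_re]
    linarith [logDist_le_logDist hy hic hi left_mem_uIcc,
      logDist_le_logDist hy hio left_mem_uIcc ho]
  · have hsub : uIcc c e ⊂ uIcc j e := by
      rw [uIcc_comm] at hcej
      exact Finset.ssubset_iff_subset_ne.2 ⟨uIcc_subset_uIcc hcej right_mem_uIcc,
        fun heq => hj (heq ▸ left_mem_uIcc)⟩
    refine ⟨j, e, hsub, hint, fun y hy => ?_⟩
    simp only [map_add, map_sub, logForm_pairExponent, add_re, sub_re, ofReal_re]
    linarith [logDist_add_logDist_le hy hi hic hcij hcej hj,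
      logDist_le_logDist hy hio (h.subset hi) right_mem_uIcc]

lemma exists_dilationError_eq (h : IsNeighbour c e o) (hce : c ≠ e) (i j : Fin (n + 2)) :
    ∃ a : ℂ, ∃ m ∈ gainShifts c e, ∀ y ∈ orderedSimplex n,
      dilationError c e o y i j = a * cexp (logForm y m) := by
  obtain rfl | hic := eq_or_ne i c
  · refine ⟨0, _, pairExponent_sub_mem_gainShifts h right_mem_uIcc hce.symm, fun y _ => ?_⟩
    simp [dilationError]
  by_cases hi : i ∈ uIcc c e
  swap
  · refine ⟨0, _, pairExponent_sub_mem_gainShifts h right_mem_uIcc hce.symm, fun y _ => ?_⟩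
    simp [dilationError, hi]
  by_cases hj : j ∈ uIcc c e
  · refine ⟨nodeSign i c * nodeSign c o, _, pairExponent_sub_mem_gainShifts h hi hic,
      fun y hy => ?_⟩
    rw [dilationError, if_pos hi, if_pos hj, relPos, node_sub_eq hy hic,
      inv_node_sub_eq hy h.pivot_ne, sub_eq_add_neg, map_add, Complex.exp_add]
    ring
  · have hio : i ≠ o := fun hio => h.notMem (hio ▸ hi)
    have hij : i ≠ j := fun hij => hj (hij ▸ hi)
    refine ⟨nodeSign i c * nodeSign c o * (nodeSign i o * nodeSign i j), _,
      pairExponent_add_mem_gainShifts h hi hic hj, fun y hy => ?_⟩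
    rw [dilationError, if_pos hi, if_neg hj, relPos, node_sub_eq hy hic,
      inv_node_sub_eq hy h.pivot_ne, node_sub_eq hy hio, inv_node_sub_eq hy hij, sub_eq_add_neg,
      sub_eq_add_neg, map_add, map_add, map_add, Complex.exp_add, Complex.exp_add, Complex.exp_add]
    ring

lemma hasModerateGrowth_relPos (c o i : Fin (n + 2)) :
    HasModerateGrowth fun y : Fin n → ℝ => relPos c o y i :=
  (hasModerateGrowth_node_sub i c).mul (hasModerateGrowth_inv_node_sub c o)

lemma dilation_eq_zero_of_isMin_or_isMax (h : IsNeighbour c e o) (hi : IsMin i ∨ IsMax i)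
    (y : Fin n → ℝ) : dilation c e o y i = 0 ∧ dilationDeriv c e o y i = 0 := by
  by_cases hmem : i ∈ uIcc c e
  · have hic : i = c := by
      obtain ⟨hce, ho⟩ | ⟨hce, ho⟩ := h
      · rw [uIcc_of_le hce.le, mem_Icc] at hmem
        exact hi.elim (fun hmin => hmin.eq_of_ge hmem.1)
          fun hmax => absurd (hmem.2.trans_lt ho.lt) hmax.not_lt
      · rw [uIcc_of_ge hce.le, mem_Icc] at hmem
        exact hi.elim (fun hmin => absurd (ho.lt.trans_le hmem.1) hmin.not_lt)
          fun hmax => hmax.eq_of_le hmem.2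
    simp [dilation, dilationDeriv, hic]
  · simp [dilation, dilationDeriv, hmem]

lemma hasLineDerivAt_dilation (h : IsNeighbour c e o) (k : Fin n) (hy : y ∈ orderedSimplex n) :
    HasLineDerivAt ℝ (fun z => dilation c e o z k.castSucc.succ)
      (dilationDeriv c e o y k.castSucc.succ) y (Pi.single k 1) := by
  by_cases hk : k.castSucc.succ ∈ (uIcc c e).erase c
  swap
  · have hzero (z : Fin n → ℝ) : dilation c e o z k.castSucc.succ = 0 := by
      by_cases hmem : k.castSucc.succ ∈ uIcc c e
      · rw [of_not_not fun hne => hk (mem_erase.2 ⟨hne, hmem⟩)]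
        simp [dilation]
      · simp [dilation, hmem]
    simpa only [HasLineDerivAt, hzero, dilationDeriv, if_neg hk] using
      hasDerivAt_const (0 : ℝ) (0 : ℂ)
  obtain ⟨hkc, hmem⟩ := mem_erase.1 hk
  have hko : k.castSucc.succ ≠ o := fun hko => h.notMem (hko ▸ hmem)
  have hco : (node y c - node y o : ℂ) ≠ 0 := mod_cast node_sub_ne_zero hy h.pivot_ne
  have hline (t : ℝ) : dilation c e o (y + t • Pi.single k 1) k.castSucc.succ =
      (y k - node y c + t) * (node y c - node y o : ℂ)⁻¹ * (y k - node y o + t) := by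
    simp only [dilation, relPos, hmem, if_true, node_add_smul_single, Pi.add_apply, Pi.smul_apply,
      Pi.single_eq_same, Pi.single_eq_of_ne hkc.symm, Pi.single_eq_of_ne hko.symm, smul_eq_mul,
      mul_one, mul_zero, add_zero, node_castSucc_succ, ofReal_sub, ofReal_add]
    ring
  have ht (a : ℂ) : HasDerivAt (fun t : ℝ => a + t) 1 0 :=
    (hasDerivAt_id' (0 : ℝ)).ofReal_comp.const_add a
  have := ((ht (y k - node y c)).mul_const (node y c - node y o : ℂ)⁻¹).mul (ht (y k - node y o))
  simp only [HasLineDerivAt, hline, dilationDeriv, if_pos hk]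
  convert! this using 1
  simp only [relPos, node_castSucc_succ, ofReal_sub, ofReal_zero, add_zero]
  field_simp
  ring

lemma exists_norm_kernelDivergence_dilation_le (h : IsNeighbour c e o) (hce : c ≠ e)
    (s : Exponents n) : ∃ B : ℝ, ∀ y ∈ orderedSimplex n,
      ‖kernelDivergence (dilation c e o) (dilationDeriv c e o) s y‖ ≤ B := by
  choose a m hm herror using exists_dilationError_eq h hce
  refine ⟨‖(#(uIcc c e) - 1 + clusterExponent (uIcc c e) s : ℂ)‖ +
    ∑ i, ∑ j, ‖errorWeight s i j‖ * ‖a i j‖, fun y hy => ?_⟩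
  have hle (i j : Fin (n + 2)) : ‖dilationError c e o y i j‖ ≤ ‖a i j‖ := by
    rw [herror i j y hy, norm_mul, Complex.norm_exp]
    refine mul_le_of_le_one_right (norm_nonneg _) (Real.exp_le_one_iff.2 ?_)
    exact (gainShifts_subset hce (hm i j)).2 y hy
  rw [kernelDivergence_dilation hy h.pivot_ne]
  refine (norm_add_le _ _).trans (add_le_add_right ?_ _)
  refine norm_sum_le_of_le _ fun i _ => norm_sum_le_of_le _ fun j _ => ?_
  rw [norm_mul]
  exact mul_le_mul_of_nonneg_left (hle i j) (norm_nonneg _)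

lemma isBoundedNodeField_dilation (h : IsNeighbour c e o) (hce : c ≠ e) :
    IsBoundedNodeField (dilation c e o) (dilationDeriv c e o) where
  zero := dilation_eq_zero_of_isMin_or_isMax h (.inl isMin_bot)
  last := dilation_eq_zero_of_isMin_or_isMax h (.inr isMax_top)
  growth i := by
    by_cases hi : i ∈ uIcc c e <;> simp only [dilation, hi, if_true, if_false]
    · exact (hasModerateGrowth_relPos c o i).mul (hasModerateGrowth_node_sub i o)
    · exact hasModerateGrowth_const 0
  growth_deriv i := by
    by_cases hi : i ∈ (uIcc c e).erase c <;> simp only [dilationDeriv, hi, if_true, if_false]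
    · exact (hasModerateGrowth_const 1).add
        ((hasModerateGrowth_const 2).mul (hasModerateGrowth_relPos c o i))
    · exact hasModerateGrowth_const 0
  hasLineDerivAt k _ hy := hasLineDerivAt_dilation h k hy
  bounded := exists_norm_kernelDivergence_dilation_le h hce

end Dilation

section Reduction

open Finset

variable {n : ℕ} {s t m : Exponents n} {c e : Fin (n + 2)}

/-- Absolute convergence of `nodeIntegral s`. -/
def IsConvergent (s : Exponents n) : Prop :=
  IntegrableOn (fun y => cexp (logForm y s)) (orderedSimplex n)

/-- The integral over the ordered simplex of the product of the powers `|x_i - x_j| ^ s_ij` of the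
differences of the nodes `1, y_1, …, y_n, 0`. It has the junk value `0` unless `s` is convergent. -/
def nodeIntegral (s : Exponents n) : ℂ := ∫ y in orderedSimplex n, cexp (logForm y s)

lemma IsConvergent.mono (hs : IsConvergent s)
    (h : ∀ y ∈ orderedSimplex n, (logForm y t).re ≤ (logForm y s).re) : IsConvergent t := by
  refine Integrable.mono hs ((continuousOn_logForm_apply t).cexp.aestronglyMeasurable
    (isOpen_orderedSimplex n).measurableSet)
    (ae_restrict_of_forall_mem (isOpen_orderedSimplex n).measurableSet fun y hy => ?_)
  simpa only [Complex.norm_exp] using Real.exp_le_exp.2 (h y hy)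

lemma IsConvergent.add (hs : IsConvergent s) (hm : m ∈ shiftsBelow 0) : IsConvergent (s + m) :=
  hs.mono fun y hy => by
    rw [map_add, add_re]
    exact add_le_of_nonpos_right (hm.2 y hy)

/-- The exponents for which some proper cluster of nodes has integral cluster exponent. -/
def resonant (n : ℕ) : Set (Exponents n) :=
  {s | ∃ c e, c ≠ e ∧ uIcc c e ≠ univ ∧ ∃ z : ℤ, clusterExponent (uIcc c e) s = z}

lemma clusterExponent_add (J : Finset (Fin (n + 2))) (s t : Exponents n) :
    clusterExponent J (s + t) = clusterExponent J s + clusterExponent J t :=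
  sum_add_distrib

lemma analyticAt_entry (i j : Fin (n + 2)) (s : Exponents n) :
    AnalyticAt ℂ (fun s : Exponents n => s i j) s :=
  ((ContinuousLinearMap.proj (R := ℂ) (φ := fun _ : Fin (n + 2) => ℂ) j).comp
    (ContinuousLinearMap.proj (φ := fun _ => Fin (n + 2) → ℂ) i)).analyticAt s

lemma analyticAt_clusterExponent (J : Finset (Fin (n + 2))) (s : Exponents n) :
    AnalyticAt ℂ (clusterExponent J) s :=
  J.offDiag.analyticAt_fun_sum fun q _ => analyticAt_entry q.1 q.2 s

lemma isClosed_resonant (n : ℕ) : IsClosed (resonant n) := by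
  have heq : resonant n = ⋃ p : {p : Fin (n + 2) × Fin (n + 2) // p.1 ≠ p.2 ∧ uIcc p.1 p.2 ≠ univ},
      clusterExponent (uIcc p.1.1 p.1.2) ⁻¹' Set.range ((↑) : ℤ → ℂ) := by
    ext s
    simp [resonant, eq_comm, and_assoc]
  rw [heq]
  refine isClosed_iUnion_of_finite fun p => IsClosed.preimage ?_ Complex.isClosed_range_intCast
  exact continuous_iff_continuousAt.2 fun s => (analyticAt_clusterExponent _ s).continuousAt

lemma exists_clusterExponent_eq_intCast (hm : m ∈ integerExponents n) (J : Finset (Fin (n + 2))) :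
    ∃ z : ℤ, clusterExponent J m = z := by
  choose z hz using mem_integerExponents.1 hm
  exact ⟨∑ q ∈ J.offDiag, z q.1 q.2, by simp [clusterExponent, hz]⟩

lemma add_notMem_resonant (hs : s ∉ resonant n) (hm : m ∈ integerExponents n) :
    s + m ∉ resonant n := by
  rintro ⟨c, e, hce, hne, z, hz⟩
  obtain ⟨w, hw⟩ := exists_clusterExponent_eq_intCast hm (uIcc c e)
  refine hs ⟨c, e, hce, hne, z - w, ?_⟩
  rw [clusterExponent_add, hw] at hz
  rw [eq_sub_of_add_eq hz, Int.cast_sub]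

/-- At nonresonant exponents, `nodeIntegral` is the linear combination, with analytic coefficients
`a`, of its own translates by the shifts `m`, all of which lie in `Q`. -/
structure IsReduction {ι : Type} [Fintype ι] (Q : Set (Exponents n)) (a : ι → Exponents n → ℂ)
    (m : ι → Exponents n) : Prop where
  analyticOnNhd : ∀ i, AnalyticOnNhd ℂ (a i) (resonant n)ᶜ
  mem : ∀ i, m i ∈ Q
  nodeIntegral_eq : ∀ s ∉ resonant n, IsConvergent s →
    nodeIntegral s = ∑ i, a i s * nodeIntegral (s + m i)

/-- `nodeIntegral` admits a reduction to translates by finitely many shifts in `Q`. -/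
def ReducesTo (Q : Set (Exponents n)) : Prop :=
  ∃ (ι : Type) (_ : Fintype ι) (a : ι → Exponents n → ℂ) (m : ι → Exponents n), IsReduction Q a m

lemma reducesTo_of_zero_mem {Q : Set (Exponents n)} (h : 0 ∈ Q) : ReducesTo Q :=
  ⟨Unit, inferInstance, fun _ _ => 1, fun _ => 0, fun _ => analyticOnNhd_const, fun _ => h,
    fun s _ _ => by simp⟩

lemma ReducesTo.bind {Q R : Set (Exponents n)} (hQ : ReducesTo Q) (hle : Q ⊆ shiftsBelow 0)
    (h : ∀ m ∈ Q, ∃ P, ReducesTo P ∧ ∀ k ∈ P, m + k ∈ R) : ReducesTo R := by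
  obtain ⟨ι, _, a, m, ha, hm, hred⟩ := hQ
  choose P hP hPR using fun i => h (m i) (hm i)
  choose κ _ b k hred' using hP
  have hnonres (i : ι) {s : Exponents n} (hs : s ∉ resonant n) : s + m i ∉ resonant n :=
    add_notMem_resonant hs (hle (hm i)).1
  refine ⟨Σ i, κ i, inferInstance, fun p s => a p.1 s * b p.1 p.2 (s + m p.1),
    fun p => m p.1 + k p.1 p.2, fun p s hs => ?_, fun p => hPR _ _ ((hred' _).mem _),
    fun s hs hconv => ?_⟩
  · exact (ha p.1 s hs).fun_mul <| ((hred' p.1).analyticOnNhd p.2 _ (hnonres p.1 hs)).comp_of_eq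
      (analyticAt_id.add analyticAt_const) rfl
  · rw [hred s hs hconv, Fintype.sum_sigma]
    refine sum_congr rfl fun i _ => ?_
    rw [(hred' i).nodeIntegral_eq _ (hnonres i hs) (hconv.add (hle (hm i))), mul_sum]
    exact sum_congr rfl fun j _ => by rw [add_assoc, mul_assoc]

lemma gainShifts_comm (c e : Fin (n + 2)) : gainShifts c e = gainShifts e c := by
  simp only [gainShifts, uIcc_comm c e, logDist_comm _ c e]

lemma exists_isNeighbour (hce : c ≠ e) (hne : uIcc c e ≠ univ) :
    ∃ o, IsNeighbour c e o ∨ IsNeighbour e c o := by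
  wlog hlt : c < e generalizing c e
  · obtain ⟨o, ho⟩ := this hce.symm (uIcc_comm c e ▸ hne) (hce.lt_or_gt.resolve_left hlt)
    exact ⟨o, ho.symm⟩
  by_cases hmax : IsMax e
  · have hmin : ¬IsMin c := by
      refine fun hmin => hne (eq_univ_of_forall fun i => ?_)
      rw [uIcc_of_le hlt.le, mem_Icc]
      exact ⟨hmin.isBot i, hmax.isTop i⟩
    obtain ⟨o, ho⟩ := exists_covBy_of_wellFoundedGT hmin
    exact ⟨o, .inr (.inr ⟨hlt, ho⟩)⟩
  · obtain ⟨o, ho⟩ := exists_covBy_of_wellFoundedLT hmax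
    exact ⟨o, .inl (.inl ⟨hlt, ho⟩)⟩

lemma card_sub_one_add_clusterExponent_ne_zero (hs : s ∉ resonant n) (hce : c ≠ e)
    (hne : uIcc c e ≠ univ) : (#(uIcc c e) - 1 + clusterExponent (uIcc c e) s : ℂ) ≠ 0 := by
  refine fun h => hs ⟨c, e, hce, hne, 1 - #(uIcc c e), ?_⟩
  push_cast
  linear_combination h

lemma integral_kernelDivergence_dilation {o : Fin (n + 2)} (h : IsNeighbour c e o) (hce : c ≠ e)
    {a : Fin (n + 2) → Fin (n + 2) → ℂ} {m : Fin (n + 2) → Fin (n + 2) → Exponents n}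
    (hm : ∀ i j, m i j ∈ gainShifts c e)
    (herror : ∀ i j, ∀ y ∈ orderedSimplex n,
      dilationError c e o y i j = a i j * cexp (logForm y (m i j))) (hs : IsConvergent s) :
    ∫ y in orderedSimplex n,
        kernelDivergence (dilation c e o) (dilationDeriv c e o) s y * cexp (logForm y s) =
      (#(uIcc c e) - 1 + clusterExponent (uIcc c e) s) * nodeIntegral s +
        ∑ i, ∑ j, errorWeight s i j * a i j * nodeIntegral (s + m i j) := by
  have hint (i j : Fin (n + 2)) : IsConvergent (s + m i j) :=
    hs.add (gainShifts_subset hce (hm i j))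
  have hexpand : ∀ y ∈ orderedSimplex n,
      kernelDivergence (dilation c e o) (dilationDeriv c e o) s y * cexp (logForm y s) =
        (#(uIcc c e) - 1 + clusterExponent (uIcc c e) s) * cexp (logForm y s) +
          ∑ i, ∑ j, errorWeight s i j * a i j * cexp (logForm y (s + m i j)) := by
    intro y hy
    rw [kernelDivergence_dilation hy h.pivot_ne, add_mul, sum_mul]
    congr 1
    refine sum_congr rfl fun i _ => ?_
    rw [sum_mul]
    refine sum_congr rfl fun j _ => ?_
    rw [herror i j y hy, map_add, Complex.exp_add]
    ring
  rw [setIntegral_congr_fun (isOpen_orderedSimplex n).measurableSet hexpand,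
    integral_add (hs.const_mul _) (integrable_finsetSum _ fun i _ =>
      integrable_finsetSum _ fun j _ => (hint i j).const_mul _), integral_const_mul,
    integral_finsetSum _ fun i _ => integrable_finsetSum _ fun j _ => (hint i j).const_mul _]
  congr 1
  refine sum_congr rfl fun i _ => ?_
  rw [integral_finsetSum _ fun j _ => (hint i j).const_mul _]
  exact sum_congr rfl fun j _ => integral_const_mul _ _

lemma analyticAt_errorWeight (i j : Fin (n + 2)) (s : Exponents n) :
    AnalyticAt ℂ (fun s => errorWeight s i j) s := by
  by_cases hij : i = j <;> simp only [errorWeight, hij, if_true, if_false]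
  · exact analyticAt_const
  · exact (analyticAt_entry i j s).fun_add (analyticAt_entry j i s)

lemma IsNeighbour.reducesTo {o : Fin (n + 2)} (h : IsNeighbour c e o) (hce : c ≠ e)
    (hne : uIcc c e ≠ univ) : ReducesTo (gainShifts c e) := by
  choose a m hm herror using exists_dilationError_eq h hce
  refine ⟨Fin (n + 2) × Fin (n + 2), inferInstance,
    fun p s => -(errorWeight s p.1 p.2 * a p.1 p.2) *
      (#(uIcc c e) - 1 + clusterExponent (uIcc c e) s)⁻¹,
    fun p => m p.1 p.2, fun p s hs => ?_, fun p => hm _ _, fun s hs hconv => ?_⟩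
  · exact ((analyticAt_errorWeight p.1 p.2 s).fun_mul analyticAt_const).fun_neg.fun_mul <|
      (analyticAt_const.fun_add (analyticAt_clusterExponent _ s)).fun_inv
        (card_sub_one_add_clusterExponent_ne_zero hs hce hne)
  · have hzero := (isBoundedNodeField_dilation h hce).integral_divergence_eq_zero hconv
    rw [integral_kernelDivergence_dilation h hce hm herror hconv] at hzero
    have hcoeff := card_sub_one_add_clusterExponent_ne_zero hs hce hne
    rw [Fintype.sum_prod_type]
    refine mul_left_cancel₀ hcoeff ?_
    simp only [mul_sum]
    rw [eq_neg_of_add_eq_zero_left hzero]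
    simp only [← sum_neg_distrib]
    refine sum_congr rfl fun i _ => sum_congr rfl fun j _ => ?_
    field_simp

lemma reducesTo_gainShifts (hce : c ≠ e) (hne : uIcc c e ≠ univ) :
    ReducesTo (gainShifts c e) := by
  obtain ⟨o, ho | ho⟩ := exists_isNeighbour hce hne
  · exact ho.reducesTo hce hne
  · exact gainShifts_comm c e ▸ ho.reducesTo hce.symm (uIcc_comm c e ▸ hne)

lemma reducesTo_logDist (hce : c ≠ e) : ReducesTo (shiftsBelow fun y => logDist y c e) := by
  induction hcard : #(uIcc c e)ᶜ using Nat.strong_induction_on generalizing c e with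
  | _ N ih =>
  obtain huniv | hne := eq_or_ne (uIcc c e) univ
  · refine reducesTo_of_zero_mem ⟨zero_mem _, fun y hy => ?_⟩
    have hle := logDist_le_logDist hy Fin.last_pos.ne (huniv ▸ mem_univ 0)
      (huniv ▸ mem_univ (Fin.last (n + 1)))
    simpa [logDist] using hle
  refine (reducesTo_gainShifts hce hne).bind (gainShifts_subset hce) fun m hm => ?_
  obtain ⟨c', e', hlt, hm⟩ := hm
  have hce' : c' ≠ e' := by
    rintro rfl
    rw [uIcc_self] at hlt
    exact hce ((mem_singleton.1 (hlt.1 left_mem_uIcc)).trans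
      (mem_singleton.1 (hlt.1 right_mem_uIcc)).symm)
  refine ⟨_, ih _ (hcard ▸ card_lt_card (compl_ssubset_compl.2 hlt)) hce' rfl, fun k hk => ?_⟩
  refine shiftsBelow_mono (fun y _ => ?_) (add_mem_shiftsBelow hm hk)
  simp

lemma reducesTo_sum_logDist (T : Finset (Fin (n + 2) × Fin (n + 2))) :
    ReducesTo (shiftsBelow fun y : Fin n → ℝ => ∑ q ∈ T, logDist y q.1 q.2) := by
  induction T using Finset.induction with
  | empty => exact reducesTo_of_zero_mem ⟨zero_mem _, fun y _ => by simp⟩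
  | insert q T hq ih =>
    refine ih.bind (shiftsBelow_mono fun y hy => sum_nonpos fun p _ => logDist_nonpos hy _ _)
      fun m hm => ⟨shiftsBelow fun y => logDist y q.1 q.2, ?_, fun k hk => ?_⟩
    · by_cases hq : q.1 = q.2
      · exact reducesTo_of_zero_mem ⟨zero_mem _, fun y _ => by simp [logDist, hq]⟩
      · exact reducesTo_logDist hq
    · refine shiftsBelow_mono (fun y _ => ?_) (add_mem_shiftsBelow hm hk)
      simp [sum_insert hq, add_comm]

lemma reducesTo_neg_barrier (n : ℕ) : ReducesTo (shiftsBelow fun y : Fin n → ℝ => -barrier y) := by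
  simpa only [barrier, neg_neg, ← sum_product', univ_product_univ] using
    reducesTo_sum_logDist (n := n) univ

end Reduction

section ParametricIntegral

variable {X V : Type*} [MeasurableSpace X] {μ : Measure X} [NormedAddCommGroup V]
  [NormedSpace ℂ V] {L : X → V →L[ℂ] ℂ} {w : X → ℂ} {r : NNReal}

/-- The power series at `0` of `v ↦ exp (l v)`, for a linear form `l`. -/
def expLinearSeries (l : V →L[ℂ] ℂ) : FormalMultilinearSeries ℂ V ℂ :=
  (NormedSpace.expSeries ℂ ℂ).compContinuousLinearMap l

lemma expLinearSeries_apply (l : V →L[ℂ] ℂ) (k : ℕ) (v : V) :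
    expLinearSeries l k (fun _ => v) = l v ^ k / k.factorial := by
  simp [expLinearSeries, NormedSpace.expSeries, Function.comp_def, div_eq_inv_mul]

lemma norm_expLinearSeries_le (l : V →L[ℂ] ℂ) (k : ℕ) :
    ‖expLinearSeries l k‖ ≤ ‖l‖ ^ k / k.factorial := by
  refine (ContinuousMultilinearMap.norm_compContinuousLinearMap_le _ _).trans ?_
  simp [NormedSpace.expSeries, norm_smul, div_eq_inv_mul]

lemma continuous_expLinearSeries (k : ℕ) :
    Continuous fun l : V →L[ℂ] ℂ => expLinearSeries l k :=
  (ContinuousLinearMap.apply ℂ _ (NormedSpace.expSeries ℂ ℂ k)).continuous.comp <|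
    (ContinuousMultilinearMap.compContinuousLinearMapContinuousMultilinear ℂ
      (fun _ : Fin k => V) (fun _ : Fin k => ℂ) ℂ).cont.comp <| continuous_pi fun _ => continuous_id

lemma norm_smul_expLinearSeries_mul_pow_le (a : ℂ) (l : V →L[ℂ] ℂ) (r : NNReal) (k : ℕ) :
    ‖a • expLinearSeries l k‖ * r ^ k ≤ ‖a‖ * Real.exp (r * ‖l‖) :=
  calc ‖a • expLinearSeries l k‖ * r ^ k ≤ ‖a‖ * (‖l‖ ^ k / k.factorial) * r ^ k := by
        rw [norm_smul]; gcongr; exact norm_expLinearSeries_le l k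
    _ = ‖a‖ * ((r * ‖l‖) ^ k / k.factorial) := by ring
    _ ≤ ‖a‖ * Real.exp (r * ‖l‖) := by
        gcongr; exact Real.pow_div_factorial_le_exp _ (by positivity) k

lemma integrable_smul_expLinearSeries (hL : AEStronglyMeasurable L μ)
    (hw : AEStronglyMeasurable w μ) (hr : 0 < r)
    (hint : Integrable (fun x => ‖w x‖ * Real.exp (r * ‖L x‖)) μ) (k : ℕ) :
    Integrable (fun x => w x • expLinearSeries (L x) k) μ := by
  refine Integrable.mono' (hint.mul_const (((r : ℝ) ^ k)⁻¹))
    (hw.smul ((continuous_expLinearSeries k).comp_aestronglyMeasurable hL))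
    (ae_of_all _ fun x => ?_)
  rw [le_mul_inv_iff₀ (by positivity)]
  exact norm_smul_expLinearSeries_mul_pow_le _ _ _ _

lemma hasSum_integral_smul_expLinearSeries (hL : AEStronglyMeasurable L μ)
    (hw : AEStronglyMeasurable w μ)
    (hint : Integrable (fun x => ‖w x‖ * Real.exp (r * ‖L x‖)) μ) {v : V} (hv : ‖v‖ ≤ r) :
    HasSum (fun k => ∫ x, w x * (L x v ^ k / k.factorial) ∂μ) (∫ x, w x * cexp (L x v) ∂μ) := by
  have hexp (x : X) : HasSum (fun k : ℕ => ‖w x‖ * ((r * ‖L x‖) ^ k / k.factorial))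
      (‖w x‖ * Real.exp (r * ‖L x‖)) := by
    rw [Real.exp_eq_exp_ℝ]
    exact (NormedSpace.expSeries_div_hasSum_exp (r * ‖L x‖ : ℝ)).mul_left _
  refine hasSum_integral_of_dominated_convergence
    (fun k x => ‖w x‖ * ((r * ‖L x‖) ^ k / k.factorial)) (fun k => ?_)
    (fun k => ae_of_all _ fun x => ?_) (ae_of_all _ fun x => (hexp x).summable)
    (by simpa only [(hexp _).tsum_eq] using hint) (ae_of_all _ fun x => ?_)
  · exact hw.mul ((((ContinuousLinearMap.apply ℂ ℂ v).continuous.pow k).div_const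
      _).comp_aestronglyMeasurable hL)
  · have hle : ‖L x v‖ ≤ r * ‖L x‖ := by
      rw [mul_comm]
      exact (L x).le_opNorm_of_le hv
    rw [norm_mul, norm_div, norm_pow, Complex.norm_natCast]
    gcongr
  · rw [Complex.exp_eq_exp_ℂ]
    exact (NormedSpace.expSeries_div_hasSum_exp (L x v)).mul_left _

lemma analyticAt_integral_mul_cexp (hL : AEStronglyMeasurable L μ)
    (hw : AEStronglyMeasurable w μ) (hr : 0 < r)
    (hint : Integrable (fun x => ‖w x‖ * Real.exp (r * ‖L x‖)) μ) :
    AnalyticAt ℂ (fun v => ∫ x, w x * cexp (L x v) ∂μ) 0 := by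
  have hterm := integrable_smul_expLinearSeries hL hw hr hint
  refine ⟨fun k => ∫ x, w x • expLinearSeries (L x) k ∂μ, r, ?_, by simpa using hr, ?_⟩
  · refine FormalMultilinearSeries.le_radius_of_bound _
      (∫ x, ‖w x‖ * Real.exp (r * ‖L x‖) ∂μ) fun k => ?_
    calc ‖∫ x, w x • expLinearSeries (L x) k ∂μ‖ * (r : ℝ) ^ k
        ≤ (∫ x, ‖w x • expLinearSeries (L x) k‖ ∂μ) * r ^ k := by
          gcongr; exact norm_integral_le_integral_norm _
      _ = ∫ x, ‖w x • expLinearSeries (L x) k‖ * r ^ k ∂μ := (integral_mul_const _ _).symm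
      _ ≤ ∫ x, ‖w x‖ * Real.exp (r * ‖L x‖) ∂μ :=
          integral_mono ((hterm k).norm.mul_const _) hint fun x =>
            norm_smul_expLinearSeries_mul_pow_le _ _ _ _
  · intro v hv
    have hv' : ‖v‖ ≤ r := by
      rw [Metric.mem_eball, edist_zero_right] at hv
      exact_mod_cast hv.le
    simpa only [zero_add, ContinuousMultilinearMap.integral_apply (hterm _),
      smul_apply, expLinearSeries_apply, smul_eq_mul] using
      hasSum_integral_smul_expLinearSeries hL hw hint hv'

lemma analyticAt_nodeIntegral {n : ℕ} {s : Exponents n} (hs : IsConvergent (s - 1)) :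
    AnalyticAt ℂ nodeIntegral s := by
  have hmeas := (isOpen_orderedSimplex n).measurableSet
  have hconv : Integrable (fun y => ‖cexp (logForm y s)‖ * Real.exp ((1 : NNReal) * ‖logForm y‖))
      (volume.restrict (orderedSimplex n)) := by
    refine Integrable.mono hs (((continuousOn_logForm_apply s).cexp.norm.mul
      (continuousOn_const.mul continuousOn_logForm.norm).rexp).aestronglyMeasurable hmeas)
      (ae_restrict_of_forall_mem hmeas fun y hy => ?_)
    rw [norm_mul, norm_norm, Real.norm_eq_abs, Real.abs_exp, Complex.norm_exp, Complex.norm_exp,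
      ← Real.exp_add, map_sub, logForm_one, NNReal.coe_one, one_mul, sub_neg_eq_add, add_re,
      ofReal_re]
    gcongr
    exact norm_logForm_le hy
  have h := analyticAt_integral_mul_cexp (continuousOn_logForm.aestronglyMeasurable hmeas)
    ((continuousOn_logForm_apply s).cexp.aestronglyMeasurable hmeas) one_pos hconv
  have hsub : AnalyticAt ℂ (fun t : Exponents n => t - s) s := analyticAt_id.sub analyticAt_const
  refine (h.comp_of_eq hsub (sub_self s)).congr (.of_forall fun t => ?_)
  simp only [Function.comp_apply, ← Complex.exp_add, ← map_add, add_sub_cancel, nodeIntegral]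

end ParametricIntegral

section Continuation

open Filter

variable {n : ℕ} {s : Exponents n} {k : ℕ}

lemma isConvergent_add_nsmul (hs : ‖s‖ ≤ k) : IsConvergent (s + k • 1) := by
  have hzero : IsConvergent (0 : Exponents n) := by
    simpa [IsConvergent] using (volume_orderedSimplex_lt_top n)
  refine hzero.mono fun y hy => ?_
  rw [map_add, map_nsmul, logForm_one, map_zero, zero_re, add_re, nsmul_eq_mul, mul_neg, neg_re,
    ← ofReal_natCast, re_ofReal_mul, ofReal_re]
  linarith [re_logForm_le hy s, mul_le_mul_of_nonneg_right hs (barrier_nonneg hy)]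

variable {ι : Type} [Fintype ι] {a : ι → Exponents n → ℂ} {m : ι → Exponents n}

/-- The `k`-fold iterate of the reduction with coefficients `a` and shifts `m`. -/
def reductionIterate (a : ι → Exponents n → ℂ) (m : ι → Exponents n) : ℕ → Exponents n → ℂ
  | 0, s => nodeIntegral s
  | k + 1, s => ∑ i, a i s * reductionIterate a m k (s + m i)

namespace IsReduction

variable (h : IsReduction (shiftsBelow fun y : Fin n → ℝ => -barrier y) a m)

include h

lemma add_notMem_resonant (hs : s ∉ resonant n) (i : ι) : s + m i ∉ resonant n :=
  _root_.add_notMem_resonant hs (h.mem i).1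

lemma isConvergent_add (hs : IsConvergent (s + 1)) (i : ι) : IsConvergent (s + m i) :=
  hs.mono fun y hy => by
    simp only [map_add, add_re, logForm_one, neg_re, ofReal_re]
    exact add_le_add_right ((h.mem i).2 y hy) _

lemma reductionIterate_eq_nodeIntegral (k : ℕ) (hs : s ∉ resonant n) (hconv : IsConvergent s) :
    reductionIterate a m k s = nodeIntegral s := by
  induction k generalizing s with
  | zero => rfl
  | succ k ih =>
    rw [reductionIterate, h.nodeIntegral_eq s hs hconv]
    refine Finset.sum_congr rfl fun i _ => ?_
    rw [ih (h.add_notMem_resonant hs i) (hconv.add (shiftsBelow_mono (fun y hy =>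
      neg_nonpos.2 (barrier_nonneg hy)) (h.mem i)))]

lemma reductionIterate_add (j : ℕ) (hs : s ∉ resonant n) (hconv : IsConvergent (s + k • 1)) :
    reductionIterate a m (k + j) s = reductionIterate a m k s := by
  induction k generalizing s with
  | zero =>
    rw [zero_smul, add_zero] at hconv
    exact h.reductionIterate_eq_nodeIntegral _ hs hconv
  | succ k ih =>
    rw [Nat.add_right_comm]
    refine Finset.sum_congr rfl fun i _ => ?_
    rw [succ_nsmul, ← add_assoc] at hconv
    rw [ih (h.add_notMem_resonant hs i)
      (by simpa only [add_right_comm] using h.isConvergent_add hconv i)]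

lemma analyticAt_reductionIterate (hs : s ∉ resonant n) (hconv : IsConvergent (s - 1 + k • 1)) :
    AnalyticAt ℂ (reductionIterate a m k) s := by
  induction k generalizing s with
  | zero => exact analyticAt_nodeIntegral (by simpa using hconv)
  | succ k ih =>
    refine Finset.univ.analyticAt_fun_sum fun i _ => (h.analyticOnNhd i s hs).fun_mul ?_
    have hshift : AnalyticAt ℂ (fun t : Exponents n => t + m i) s :=
      analyticAt_id.add analyticAt_const
    refine (ih (h.add_notMem_resonant hs i) ?_).comp_of_eq hshift rfl
    rw [succ_nsmul, ← add_assoc] at hconv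
    convert h.isConvergent_add hconv i using 1
    abel

end IsReduction

/- Deeper iterates of the reduction continue `nodeIntegral` further, and agree wherever both are
defined by convergent integrals; `‖s‖` bounds the depth required at `s`. -/
theorem exists_analyticOnNhd_eq_nodeIntegral (n : ℕ) :
    ∃ F : Exponents n → ℂ, AnalyticOnNhd ℂ F (resonant n)ᶜ ∧
      ∀ s ∉ resonant n, IsConvergent s → F s = nodeIntegral s := by
  obtain ⟨ι, _, a, m, h⟩ := reducesTo_neg_barrier n
  refine ⟨fun s => reductionIterate a m ⌈‖s‖⌉₊ s, fun s hs => ?_,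
    fun s hs hconv => h.reductionIterate_eq_nodeIntegral _ hs hconv⟩
  set K := ⌈‖s‖ + 1⌉₊
  have hlocal : ∀ᶠ t in nhds s, reductionIterate a m K t = reductionIterate a m ⌈‖t‖⌉₊ t := by
    filter_upwards [(isClosed_resonant n).isOpen_compl.mem_nhds hs,
      continuous_norm.continuousAt.eventually_lt continuousAt_const (lt_add_one ‖s‖)] with t ht hlt
    obtain ⟨j, hj⟩ := Nat.exists_eq_add_of_le (Nat.ceil_mono hlt.le)
    rw [show K = ⌈‖t‖⌉₊ + j from hj,
      h.reductionIterate_add j ht (isConvergent_add_nsmul (Nat.le_ceil _))]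
  have hK : ‖s - 1‖ ≤ K := (norm_sub_le _ _).trans (by
    rw [norm_one]
    exact Nat.le_ceil _)
  exact (h.analyticAt_reductionIterate hs (isConvergent_add_nsmul hK)).congr hlocal

end Continuation

section Selberg

open Finset

variable {n : ℕ} {a : Fin n → ℂ} {β γ : ℂ} {y : Fin n → ℝ}

/-- The exponents of `∏ y_i ^ a_i (1 - y_i) ^ β ∏_{i < j} (y_i - y_j) ^ (2 * γ)` as a product of
powers of node differences; `2 * γ` is split evenly between the entries at `(i, j)` and `(j, i)`. -/
def selbergExponent (a : Fin n → ℂ) (β γ : ℂ) : Exponents n :=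
  Fin.cons (Fin.cons 0 (Fin.snoc (fun _ => β) 0 : Fin (n + 1) → ℂ))
    (Fin.snoc (fun k => Fin.cons 0 (Fin.snoc (fun _ => γ) (a k) : Fin (n + 1) → ℂ)) 0 :
      Fin (n + 1) → Fin (n + 2) → ℂ)

@[simp] lemma selbergExponent_zero_zero : selbergExponent a β γ 0 0 = 0 := rfl

@[simp] lemma selbergExponent_zero_last : selbergExponent a β γ 0 (Fin.last (n + 1)) = 0 := by
  rw [selbergExponent, ← Fin.succ_last, Fin.cons_zero, Fin.cons_succ, Fin.snoc_last]

@[simp] lemma selbergExponent_zero_castSucc_succ (k : Fin n) :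
    selbergExponent a β γ 0 k.castSucc.succ = β := by
  rw [selbergExponent, Fin.cons_zero, Fin.cons_succ, Fin.snoc_castSucc]

@[simp] lemma selbergExponent_last : selbergExponent a β γ (Fin.last (n + 1)) = 0 := by
  rw [selbergExponent, ← Fin.succ_last, Fin.cons_succ, Fin.snoc_last]

@[simp] lemma selbergExponent_castSucc_succ_zero (k : Fin n) :
    selbergExponent a β γ k.castSucc.succ 0 = 0 := by
  rw [selbergExponent, Fin.cons_succ, Fin.snoc_castSucc, Fin.cons_zero]

@[simp] lemma selbergExponent_castSucc_succ_last (k : Fin n) :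
    selbergExponent a β γ k.castSucc.succ (Fin.last (n + 1)) = a k := by
  rw [selbergExponent, Fin.cons_succ, Fin.snoc_castSucc, ← Fin.succ_last, Fin.cons_succ,
    Fin.snoc_last]

@[simp] lemma selbergExponent_castSucc_succ_castSucc_succ (k l : Fin n) :
    selbergExponent a β γ k.castSucc.succ l.castSucc.succ = γ := by
  rw [selbergExponent, Fin.cons_succ, Fin.snoc_castSucc, Fin.cons_succ, Fin.snoc_castSucc]

lemma clusterExponent_selbergExponent {J : Finset (Fin (n + 2))} {T : Finset (Fin n)}
    (hT : ∀ k, k.castSucc.succ ∈ J ↔ k ∈ T) :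
    clusterExponent J (selbergExponent a β γ) = (if 0 ∈ J then #T * β else 0) +
      (if Fin.last (n + 1) ∈ J then ∑ k ∈ T, a k else 0) + #T * (#T - 1) * γ := by
  have hpairs : ∑ k, ∑ l, (if (k ∈ T ∧ l ∈ T) ∧ k ≠ l then γ else 0) = #T * (#T - 1) * γ := by
    have hoff : univ.filter (fun q : Fin n × Fin n => (q.1 ∈ T ∧ q.2 ∈ T) ∧ q.1 ≠ q.2) =
        T.offDiag := by
      ext q
      simp [mem_offDiag, and_assoc]
    rw [← Fintype.sum_prod_type' (f := fun k l => if (k ∈ T ∧ l ∈ T) ∧ k ≠ l then γ else 0),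
      ← sum_filter, hoff, sum_const, nsmul_eq_mul, offDiag_card, Nat.cast_sub (Nat.le_mul_self _),
      Nat.cast_mul, mul_sub_one]
  rw [← hpairs]
  simp only [clusterExponent_eq_sum_ite, sum_univ_node_index, hT]
  by_cases h0 : 0 ∈ J <;> by_cases hl : Fin.last (n + 1) ∈ J <;>
    simp [h0, hl, sum_add_distrib, (Fin.succ_ne_zero _).symm, add_comm, add_left_comm,
      add_assoc]

lemma clusterExponent_Icc_zero_selbergExponent (l : Fin n) :
    clusterExponent (Icc 0 l.castSucc.succ) (selbergExponent a β γ) =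
      (l + 1 : ℕ) * (β + ((l + 1 : ℕ) - 1) * γ) := by
  have hlast : Fin.last (n + 1) ∉ Icc 0 l.castSucc.succ := by simp [Fin.last_le_iff]
  rw [clusterExponent_selbergExponent (T := Iic l) (by simp), if_neg hlast, if_pos (by simp),
    Fin.card_Iic]
  ring

lemma clusterExponent_Icc_last_selbergExponent (k : Fin n) :
    clusterExponent (Icc k.castSucc.succ (Fin.last (n + 1))) (selbergExponent a β γ) =
      ∑ i ∈ Ici k, a i + (n - k : ℕ) * ((n - k : ℕ) - 1) * γ := by
  rw [clusterExponent_selbergExponent (T := Ici k) (by simp [Fin.le_last]), if_neg (by simp),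
    if_pos (by simp [Fin.le_last]), Fin.card_Ici, zero_add]

lemma clusterExponent_Icc_castSucc_succ_selbergExponent {k l : Fin n} (hkl : k ≤ l) :
    clusterExponent (Icc k.castSucc.succ l.castSucc.succ) (selbergExponent a β γ) =
      (l - k : ℕ) * ((l - k : ℕ) + 1) * γ := by
  have hlast : Fin.last (n + 1) ∉ Icc k.castSucc.succ l.castSucc.succ := by simp [Fin.last_le_iff]
  rw [clusterExponent_selbergExponent (T := Icc k l) (by simp), if_neg hlast, if_neg (by simp),
    Fin.card_Icc, Nat.sub_add_comm (Fin.le_def.1 hkl), Nat.cast_succ]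
  ring

lemma selbergExponent_notMem_resonant {p : ℂ × ℂ × ℂ} (hp : p ∉ setA n) (z : Fin n → ℤ) :
    selbergExponent (fun k => p.1 + z k) p.2.1 p.2.2 ∉ resonant n := by
  rintro ⟨c, e, hce, hne, w, hw⟩
  wlog hlt : c < e generalizing c e
  · exact this e c hce.symm (by rwa [uIcc_comm]) (by rwa [uIcc_comm])
      (hce.lt_or_gt.resolve_left hlt)
  rw [uIcc_of_le hlt.le] at hne hw
  induction c using node_index_cases with
  | last => exact (Fin.le_last e).not_gt hlt
  | zero =>
    induction e using node_index_cases with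
    | zero => exact hce rfl
    | last => exact hne (eq_univ_of_forall fun i => by simp [Fin.le_last])
    | mid l =>
      rw [clusterExponent_Icc_zero_selbergExponent] at hw
      exact hp (.inl ⟨l + 1, by simp, l.isLt, .inr ⟨w, hw⟩⟩)
  | mid k =>
    induction e using node_index_cases with
    | zero => exact (Fin.zero_le _).not_gt hlt
    | last =>
      rw [clusterExponent_Icc_last_selbergExponent, sum_add_distrib, sum_const, nsmul_eq_mul,
        Fin.card_Ici] at hw
      refine hp (.inl ⟨n - k, by omega, by omega, .inl ⟨w - ∑ i ∈ Ici k, z i, ?_⟩⟩)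
      push_cast [← hw]
      ring
    | mid l =>
      have hkl : k < l := by simpa using hlt
      rw [clusterExponent_Icc_castSucc_succ_selbergExponent hkl.le] at hw
      exact hp (.inr ⟨l - k, by omega, by omega, w, hw⟩)

lemma analyticAt_selbergExponent (z : Fin n → ℤ) (p : ℂ × ℂ × ℂ) :
    AnalyticAt ℂ (fun p : ℂ × ℂ × ℂ => selbergExponent (fun k => p.1 + z k) p.2.1 p.2.2) p := by
  have hα (k) : AnalyticAt ℂ (fun p : ℂ × ℂ × ℂ => p.1 + z k) p :=
    analyticAt_fst.add analyticAt_const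
  have hβ : AnalyticAt ℂ (fun p : ℂ × ℂ × ℂ => p.2.1) p := analyticAt_fst.comp analyticAt_snd
  have hγ : AnalyticAt ℂ (fun p : ℂ × ℂ × ℂ => p.2.2) p := analyticAt_snd.comp analyticAt_snd
  refine AnalyticAt.pi fun i => AnalyticAt.pi fun j => ?_
  induction i using node_index_cases <;> induction j using node_index_cases <;>
    simp [hα, hβ, hγ, analyticAt_const]

lemma logForm_selbergExponent (y : Fin n → ℝ) (a : Fin n → ℂ) (β γ : ℂ) :
    logForm y (selbergExponent a β γ) =
      ∑ k, (a k * Real.log (y k) + β * Real.log (1 - y k)) +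
        γ * (∑ k, ∑ l, Real.log (y k - y l) : ℝ) := by
  simp [logForm_apply, sum_univ_node_index, logDist, sum_add_distrib, mul_sum, add_comm,
    add_assoc]

lemma sum_sum_eq_sum_sum_lt {ι R : Type*} [Fintype ι] [LinearOrder ι] [NonAssocSemiring R]
    {g : ι → ι → R} (hsymm : ∀ k l, g k l = g l k) (hdiag : ∀ k, g k k = 0) :
    ∑ k, ∑ l, g k l = ∑ k, ∑ l, if k < l then 2 * g k l else 0 := by
  have hsplit (k l : ι) :
      g k l = (if k < l then g k l else 0) + if l < k then g l k else 0 := by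
    obtain hkl | rfl | hkl := lt_trichotomy k l
    · simp [hkl, hkl.not_gt]
    · simp [hdiag]
    · simp [hkl, hkl.not_gt, hsymm k l]
  calc ∑ k, ∑ l, g k l
    _ = ∑ k, ∑ l, (if k < l then g k l else 0) + ∑ k, ∑ l, if l < k then g l k else 0 := by
      simp only [← sum_add_distrib, ← hsplit]
    _ = ∑ k, ∑ l, if k < l then 2 * g k l else 0 := by
      rw [sum_comm (f := fun k l => if l < k then g l k else 0)]
      simp only [← two_mul, mul_sum, mul_ite, mul_zero]

lemma ofReal_cpow_eq_cexp {x : ℝ} (hx : 0 < x) (w : ℂ) :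
    (x : ℂ) ^ w = cexp (w * Real.log x) := by
  rw [cpow_def_of_ne_zero (ofReal_ne_zero.2 hx.ne'), ofReal_log hx.le, mul_comm]

lemma cexp_logForm_selbergExponent (hy : y ∈ orderedSimplex n) (a : Fin n → ℂ) (β γ : ℂ) :
    cexp (logForm y (selbergExponent a β γ)) =
      (∏ k, ((y k : ℂ) ^ a k * ((1 - y k : ℝ) : ℂ) ^ β)) *
        ∏ k, ∏ l, if k < l then ((y k - y l : ℝ) : ℂ) ^ (2 * γ) else 1 := by
  have hsymm (k l) : Real.log (y k - y l) = Real.log (y l - y k) := by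
    rw [← Real.log_neg_eq_log, neg_sub]
  rw [logForm_selbergExponent, sum_sum_eq_sum_sum_lt hsymm (by simp), exp_add, exp_sum, ofReal_sum,
    mul_sum, exp_sum]
  congr 1
  · refine prod_congr rfl fun k _ => ?_
    rw [exp_add, ofReal_cpow_eq_cexp (hy.1 k).1, ofReal_cpow_eq_cexp (sub_pos.2 (hy.1 k).2)]
  · refine prod_congr rfl fun k _ => ?_
    rw [ofReal_sum, mul_sum, exp_sum]
    refine prod_congr rfl fun l _ => ?_
    split_ifs with hkl
    · rw [ofReal_cpow_eq_cexp (sub_pos.2 (hy.2 k l hkl)), ofReal_mul, ofReal_ofNat, mul_left_comm,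
        mul_assoc]
    · rw [ofReal_zero, mul_zero, exp_zero]

lemma isConvergent_selbergExponent_zero (ha : ∀ k, -1 < (a k).re) (hβ : -1 < β.re) :
    IsConvergent (selbergExponent a β 0) := by
  let g (k : Fin n) : ℝ → ℂ := (Set.Ioc 0 1).indicator fun x => (x : ℂ) ^ a k * (1 - x : ℂ) ^ β
  have hg (k) : Integrable (g k) := by
    have h := betaIntegral_convergent (u := a k + 1) (v := β + 1)
      (by simpa using neg_lt_iff_pos_add.1 (ha k)) (by simpa using neg_lt_iff_pos_add.1 hβ)
    rw [intervalIntegrable_iff_integrableOn_Ioc_of_le zero_le_one] at h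
    simpa using h.integrable_indicator measurableSet_Ioc
  refine (Integrable.fintype_prod hg).integrableOn.congr_fun (fun y hy => ?_)
    (isOpen_orderedSimplex n).measurableSet
  rw [cexp_logForm_selbergExponent hy]
  have hmem (k) : y k ∈ Set.Ioc 0 1 := ⟨(hy.1 k).1, (hy.1 k).2.le⟩
  simp [g, hmem]

lemma isConvergent_selbergExponent (ha : ∀ k, -1 < (a k).re) (hβ : -1 < β.re) (hγ : 0 ≤ γ.re) :
    IsConvergent (selbergExponent a β γ) := by
  refine (isConvergent_selbergExponent_zero ha hβ).mono fun y hy => ?_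
  have hlog (k l) : Real.log (y k - y l) ≤ 0 := by
    simpa [logDist] using logDist_nonpos hy k.castSucc.succ l.castSucc.succ
  have hsum : ∑ k, ∑ l, Real.log (y k - y l) ≤ 0 :=
    sum_nonpos fun k _ => sum_nonpos fun l _ => hlog k l
  rw [logForm_selbergExponent, logForm_selbergExponent, zero_mul, add_zero, add_re, re_mul_ofReal]
  exact add_le_of_nonpos_right (mul_nonpos_of_nonneg_of_nonpos hγ hsum)

lemma selbergIntegrand_laurentEval (hy : y ∈ orderedSimplex n) (c : (Fin n → ℤ) →₀ ℂ)
    (α β γ : ℂ) :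
    selbergIntegrand n (laurentEval c) α β γ y =
      ∑ z ∈ c.support, c z * cexp (logForm y (selbergExponent (fun k => α + z k) β γ)) := by
  rw [selbergIntegrand, laurentEval, Finsupp.sum, mul_sum]
  refine sum_congr rfl fun z _ => ?_
  have hpow (k) : (y k : ℂ) ^ (α + z k) = (y k : ℂ) ^ α * (y k : ℂ) ^ z k := by
    rw [cpow_add _ _ (ofReal_ne_zero.2 (hy.1 k).1.ne'), cpow_intCast]
  simp only [cexp_logForm_selbergExponent hy, hpow, prod_mul_distrib]
  ring

lemma selbergS_laurentEval {c : (Fin n → ℤ) →₀ ℂ} {α β γ : ℂ}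
    (h : ∀ z ∈ c.support, IsConvergent (selbergExponent (fun k => α + z k) β γ)) :
    selbergS n (laurentEval c) α β γ =
      ∑ z ∈ c.support, c z * nodeIntegral (selbergExponent (fun k => α + z k) β γ) := by
  rw [selbergS, setIntegral_congr_fun (isOpen_orderedSimplex n).measurableSet fun y hy =>
    selbergIntegrand_laurentEval hy c α β γ,
    integral_finsetSum _ fun z hz => Integrable.const_mul (h z hz) _]
  exact sum_congr rfl fun z _ => integral_const_mul _ _

end Selberg

/-- `S_n[f]` admits an analytic continuation to `ℂ³ ∖ 𝒜_n`: there is an analytic function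
on the complement of `𝒜_n` agreeing with the convergent Selberg integral on the common
domain of convergence. -/
theorem selberg_analytic_continuation_A (n d : ℕ) (hn : 1 ≤ n)
    (c : (Fin n → ℤ) →₀ ℂ) (hd : ∀ k ∈ c.support, ∀ i, -(d : ℤ) ≤ k i) :
    ∃ F : ℂ × ℂ × ℂ → ℂ, AnalyticOnNhd ℂ F (setA n)ᶜ ∧
      ∀ p : ℂ × ℂ × ℂ, p ∉ setA n →
        (d : ℝ) - 1 < p.1.re → -1 < p.2.1.re → 0 < p.2.2.re →
        F p = selbergS n (laurentEval c) p.1 p.2.1 p.2.2 := by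
  obtain ⟨F, hF, hF_eq⟩ := exists_analyticOnNhd_eq_nodeIntegral n
  refine ⟨fun p => ∑ z ∈ c.support, c z * F (selbergExponent (fun k => p.1 + z k) p.2.1 p.2.2),
    fun p hp => c.support.analyticAt_fun_sum fun z _ => analyticAt_const.mul <|
      (hF _ (selbergExponent_notMem_resonant hp z)).comp_of_eq (analyticAt_selbergExponent z p) rfl,
    fun p hp hα hβ hγ => ?_⟩
  have hconv (z) (hz : z ∈ c.support) :
      IsConvergent (selbergExponent (fun k => p.1 + z k) p.2.1 p.2.2) := by
    refine isConvergent_selbergExponent (fun k => ?_) hβ hγ.le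
    have hzk : -(d : ℝ) ≤ z k := by exact_mod_cast hd z hz k
    rw [add_re, intCast_re]
    linarith
  rw [selbergS_laurentEval hconv]
  exact Finset.sum_congr rfl fun z hz => by
    rw [hF_eq _ (selbergExponent_notMem_resonant hp z) (hconv z hz)]

end
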